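/- Assume α > 1 (so that E[X] < ∞). Then there exists a constant ρ_α ∈ (0,∞), depending only on α, such that v_N · log₂ N / c_N → ρ_α as N → ∞; equivalently, v_N ~ ρ_α c_N / log₂ N. -/

import Mathlib

open MeasureTheory ProbabilityTheory Real Filter Set

noncomputable section

/-- One step of the `N`-BRW: each of the `N` particles branches into two, the children jump
according to `jump`, and only the `N` right-most particles are kept; the result is the
sorted (ascending) vector of the `N` retained positions. -/
def brwStep (N : ℕ) (pos : Fin N → ℝ) (jump : Fin N → Fin 2 → ℝ) : Fin N → ℝ := fun i =>
  (((Finset.univ : Finset (Fin N × Fin 2)).val.map fun p => pos p.1 + jump p.1 p.2).sort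
      (· ≤ ·)).getD (N + i) 0

/-- The `N`-BRW started from the sorted configuration `x0`, driven by the jumps `jump`:
`brw N x0 jump n i` is the position `X_{i+1}(n)` of the `(i+1)`-th lowest particle at time `n`. -/
def brw (N : ℕ) (x0 : Fin N → ℝ) (jump : ℕ → Fin N → Fin 2 → ℝ) : ℕ → Fin N → ℝ
  | 0 => x0
  | n + 1 => brwStep N (brw N x0 jump n) (jump n)

/-- Position `X_N(n)` of the right-most particle of the `N`-BRW started at the origin. -/
def brwMax (N : ℕ) (jump : ℕ → Fin N → Fin 2 → ℝ) (n : ℕ) : ℝ :=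
  ⨆ i, brw N (fun _ => 0) jump n i

/-- Position `X_1(n)` of the left-most particle of the `N`-BRW started at the origin. -/
def brwMin (N : ℕ) (jump : ℕ → Fin N → Fin 2 → ℝ) (n : ℕ) : ℝ :=
  ⨅ i, brw N (fun _ => 0) jump n i

/-- The tail `P(X > x) = 1/h(x)` of the random variable `X` under `P`. -/
def tail {Ω : Type*} [MeasurableSpace Ω] (P : Measure Ω) (X : Ω → ℝ) (x : ℝ) : ℝ :=
  (P {ω | x < X ω}).toReal

/-- Generalized inverse `h⁻¹(y)` of `h(x) = 1 / P(X > x)`. -/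
def hinv {Ω : Type*} [MeasurableSpace Ω] (P : Measure Ω) (X : Ω → ℝ) (y : ℝ) : ℝ :=
  sInf {x : ℝ | 0 ≤ x ∧ tail P X x ≤ y⁻¹}

/-- The scaling sequence `c_N = h⁻¹(2 N log₂ N)`. -/
def cN {Ω : Type*} [MeasurableSpace Ω] (P : Measure Ω) (X : Ω → ℝ) (N : ℕ) : ℝ :=
  hinv P X (2 * N * Real.logb 2 N)

/-- The delayed max-plus recursion. -/
def RR (d : ℕ) (x : ℕ → ℝ) : ℕ → ℝ
  | 0 => 0
  | k + 1 => max (RR d x k) (RR d x (k - d) + x k)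
termination_by k => k
decreasing_by all_goals omega

lemma RR_zero (d : ℕ) (x : ℕ → ℝ) : RR d x 0 = 0 := by rw [RR]

lemma RR_succ (d : ℕ) (x : ℕ → ℝ) (k : ℕ) :
    RR d x (k + 1) = max (RR d x k) (RR d x (k - d) + x k) := by rw [RR]

lemma RR_mono (d : ℕ) (x : ℕ → ℝ) : Monotone (RR d x) :=
  monotone_nat_of_le_succ fun k => by rw [RR_succ]; exact le_max_left _ _

lemma RR_nonneg (d : ℕ) (x : ℕ → ℝ) (k : ℕ) : 0 ≤ RR d x k := by
  rw [← RR_zero d x]; exact RR_mono d x (Nat.zero_le k)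

lemma RR_le_sum (d : ℕ) (x : ℕ → ℝ) (hx : ∀ i, 0 ≤ x i) (k : ℕ) :
    RR d x k ≤ ∑ i ∈ Finset.range k, x i := by
  induction k with
  | zero => simp [RR_zero]
  | succ k ih =>
    rw [RR_succ, Finset.sum_range_succ]
    have h1 := RR_mono d x (Nat.sub_le k d)
    have := hx k
    apply max_le <;> linarith

lemma RR_smul (d : ℕ) (x : ℕ → ℝ) (c : ℝ) (hc : 0 ≤ c) (k : ℕ) :
    RR d (fun i => c * x i) k = c * RR d x k := by
  induction k using Nat.strong_induction_on with
  | _ k ih =>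
    cases k with
    | zero => simp [RR_zero]
    | succ k =>
      rw [RR_succ, RR_succ, ih k (by omega), ih (k - d) (by omega), ← mul_add, mul_max_of_nonneg _ _ hc]

lemma RR_congr (d : ℕ) (x y : ℕ → ℝ) (k : ℕ) (h : ∀ i < k, x i = y i) : RR d x k = RR d y k := by
  induction k using Nat.strong_induction_on with
  | _ k ih =>
    cases k with
    | zero => simp [RR_zero]
    | succ k =>
      rw [RR_succ, RR_succ, ih k (by omega) (fun i hi => h i (by omega)),
        ih (k - d) (by omega) (fun i hi => h i (by omega)), h k (by omega)]

lemma RR_subadd (d : ℕ) (x : ℕ → ℝ) (k n : ℕ) :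
    RR d x (k + n) ≤ RR d x k + RR d (fun i => x (k + i)) n := by
  induction n using Nat.strong_induction_on with
  | _ n ih =>
    cases n with
    | zero => simp [RR_zero]
    | succ n =>
      rw [← add_assoc, RR_succ, RR_succ]
      apply max_le
      · have := ih n (by omega)
        have := le_max_left (RR d (fun i => x (k + i)) n) (RR d (fun i => x (k + i)) (n - d) + x (k + n))
        linarith
      · have := le_max_right (RR d (fun i => x (k + i)) n) (RR d (fun i => x (k + i)) (n - d) + x (k + n))
        by_cases hd : d ≤ n
        · have h1 := ih (n - d) (by omega)
          rw [show k + n - d = k + (n - d) by omega]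
          linarith
        · have h1 : RR d x (k + n - d) ≤ RR d x k := RR_mono d x (by omega)
          rw [show n - d = 0 by omega, RR_zero] at this
          rw [show n - d = 0 by omega, RR_zero]
          linarith

lemma RR_superadd (d : ℕ) (x : ℕ → ℝ) (n k : ℕ) :
    RR d x n + RR d (fun i => x (n + d + i)) k ≤ RR d x (n + d + k) := by
  induction k using Nat.strong_induction_on with
  | _ k ih =>
    cases k with
    | zero => simp only [RR_zero, add_zero]; exact RR_mono d x (by omega)
    | succ k =>
      rw [← add_assoc, RR_succ, RR_succ, ← max_add_add_left]
      apply max_le_max (ih k (by omega))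
      rw [← add_assoc]
      gcongr
      by_cases hd : d ≤ k
      · have h1 := ih (k - d) (by omega)
        rwa [show n + d + k - d = n + d + (k - d) by omega]
      · rw [show k - d = 0 by omega, RR_zero, add_zero]
        exact RR_mono d x (by omega)

/-- block maximum -/
def bmax (l : ℕ) (x : ℕ → ℝ) (k : ℕ) : ℝ := ⨆ r : Fin l, x (k * l + r)

lemma le_bmax {l : ℕ} (x : ℕ → ℝ) (k n : ℕ) (h1 : k * l ≤ n) (h2 : n < (k + 1) * l) :
    x n ≤ bmax l x k := by
  have h3 : n - k * l < l := by
    have : (k + 1) * l = k * l + l := by ring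
    omega
  have := le_ciSup (f := fun r : Fin l => x (k * l + r)) (Set.finite_range _).bddAbove ⟨n - k * l, h3⟩
  simp only at this
  rwa [show k * l + (n - k * l) = n by omega] at this

lemma exists_bmax {l : ℕ} (hl : 0 < l) (x : ℕ → ℝ) (k : ℕ) :
    ∃ n, k * l ≤ n ∧ n < (k + 1) * l ∧ bmax l x k = x n := by
  have : Nonempty (Fin l) := ⟨⟨0, hl⟩⟩
  obtain ⟨r, hr⟩ := exists_eq_ciSup_of_finite (f := fun r : Fin l => x (k * l + r))
  refine ⟨k * l + r, by omega, ?_, hr.symm⟩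
  have := r.2
  have : (k + 1) * l = k * l + l := by ring
  omega

lemma coarse_ge (D d l : ℕ) (hl : 0 < l) (hD : D ≤ d * l) (x : ℕ → ℝ) (k : ℕ) :
    RR d (bmax l x) k ≤ RR D x (k * l) := by
  induction k using Nat.strong_induction_on with
  | _ k ih =>
    cases k with
    | zero => simp [RR_zero]
    | succ k =>
      rw [RR_succ]
      apply max_le
      · exact (ih k (by omega)).trans (RR_mono D x (Nat.mul_le_mul_right _ (by omega)))
      · obtain ⟨n, h1, h2, h3⟩ := exists_bmax hl x k
        rw [h3]
        calc RR d (bmax l x) (k - d) + x n ≤ RR D x ((k - d) * l) + x n := by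
              gcongr; exact ih (k - d) (by omega)
          _ ≤ RR D x (n - D) + x n := by
              gcongr
              apply RR_mono
              rw [Nat.sub_mul]; omega
          _ ≤ RR D x (n + 1) := by rw [RR_succ]; exact le_max_right _ _
          _ ≤ _ := RR_mono D x h2

lemma coarse_le (D d l : ℕ) (hl : 0 < l) (hD : d * l ≤ D) (hd : 1 ≤ d) (x : ℕ → ℝ) (k : ℕ) :
    ∀ n ≤ k * l, RR D x n ≤ RR (d - 1) (bmax l x) k := by
  induction k using Nat.strong_induction_on with
  | _ k ih =>
    cases k with
    | zero => intro n hn; simp at hn; simp [hn, RR_zero]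
    | succ k =>
      intro n
      induction n with
      | zero => intro _; rw [RR_zero]; exact RR_nonneg _ _ _
      | succ n ihn =>
        intro hn
        by_cases hk : n + 1 ≤ k * l
        · exact (ih k (by omega) _ hk).trans (RR_mono _ _ (by omega))
        · rw [RR_succ]
          apply max_le (ihn (by omega))
          have h1 := le_bmax (l := l) x k n (by omega) (by omega)
          rw [RR_succ]
          refine le_trans ?_ (le_max_right _ _)
          gcongr
          apply ih (k - (d - 1)) (by omega)
          by_cases hkd : d ≤ k + 1
          · have : (k - (d - 1)) * l + d * l = (k + 1) * l := by
              rw [← Nat.add_mul]; congr 1; omega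
            omega
          · have : (k+1) * l ≤ d * l := Nat.mul_le_mul_right _ (by omega)
            have : n - D = 0 := by omega
            rw [this]; exact Nat.zero_le _

lemma RR_zero_delay (x : ℕ → ℝ) (hx : ∀ i, 0 ≤ x i) (k : ℕ) :
    RR 0 x k ≤ ∑ i ∈ Finset.range k, x i := RR_le_sum 0 x hx k

lemma measurable_RR (d k : ℕ) : Measurable (fun x : ℕ → ℝ => RR d x k) := by
  induction k using Nat.strong_induction_on with
  | _ k ih =>
    cases k with
    | zero => simp only [RR_zero]; exact measurable_const
    | succ k =>
      simp only [RR_succ]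
      exact (ih k (by omega)).max ((ih (k - d) (by omega)).add (measurable_pi_apply k))

lemma continuous_RR (d k : ℕ) : Continuous (fun x : ℕ → ℝ => RR d x k) := by
  induction k using Nat.strong_induction_on with
  | _ k ih =>
    cases k with
    | zero => simp only [RR_zero]; exact continuous_const
    | succ k =>
      simp only [RR_succ]
      exact (ih k (by omega)).max ((ih (k - d) (by omega)).add (continuous_apply k))

/-- Selection map: which child (parent, index) becomes the particle of rank `i`. -/
def sel (N : ℕ) (y : Fin N × Fin 2 → ℝ) (i : Fin N) : Fin N × Fin 2 :=
  finProdFinEquiv.symm (Tuple.sort (y ∘ finProdFinEquiv.symm) ⟨N + i, by omega⟩)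

lemma sel_injective (N : ℕ) (y : Fin N × Fin 2 → ℝ) : Function.Injective (sel N y) := by
  intro i j h
  unfold sel at h
  have h1 := (Tuple.sort (y ∘ finProdFinEquiv.symm)).injective (finProdFinEquiv.symm.injective h)
  simp only [Fin.mk.injEq] at h1
  ext; omega

lemma brwStep_eq (N : ℕ) (pos : Fin N → ℝ) (jump : Fin N → Fin 2 → ℝ) (i : Fin N) :
    brwStep N pos jump i =
      pos (sel N (fun p => pos p.1 + jump p.1 p.2) i).1
      + jump (sel N (fun p => pos p.1 + jump p.1 p.2) i).1
          (sel N (fun p => pos p.1 + jump p.1 p.2) i).2 := by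
  unfold brwStep
  set y : Fin N × Fin 2 → ℝ := fun p => pos p.1 + jump p.1 p.2 with hy
  have hl : ((Finset.univ : Finset (Fin N × Fin 2)).val.map y).sort (· ≤ ·)
      = List.ofFn ((y ∘ finProdFinEquiv.symm) ∘ Tuple.sort (y ∘ finProdFinEquiv.symm)) := by
    apply List.Perm.eq_of_sortedLE
    · exact (Multiset.pairwise_sort _ _).sortedLE
    · exact (Tuple.monotone_sort (y ∘ finProdFinEquiv.symm)).sortedLE_ofFn
    · rw [← Multiset.coe_eq_coe, Multiset.sort_eq]
      rw [List.ofFn_eq_map, ← Multiset.map_coe]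
      have : ((List.finRange (N * 2) : List (Fin (N*2))) : Multiset (Fin (N*2))) = Finset.univ.val := rfl
      rw [this]
      have h2 : (Finset.univ : Finset (Fin N × Fin 2)).val =
        (Finset.univ : Finset (Fin (N*2))).val.map (fun k => finProdFinEquiv.symm ((Tuple.sort (y ∘ finProdFinEquiv.symm)) k)) := by
        have := Finset.map_univ_equiv ((Tuple.sort (y ∘ finProdFinEquiv.symm)).trans finProdFinEquiv.symm)
        rw [← this]; rfl
      rw [h2, Multiset.map_map]; rfl
  rw [hl, List.getD_eq_getElem _ _ (by simp; omega), List.getElem_ofFn]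
  rfl

lemma le_of_notMem_sel (N : ℕ) (y : Fin N × Fin 2 → ℝ) (p : Fin N × Fin 2)
    (hp : p ∉ Set.range (sel N y)) (i : Fin N) : y p ≤ y (sel N y i) := by
  set f := y ∘ finProdFinEquiv.symm with hf
  set k := (Tuple.sort f).symm (finProdFinEquiv p) with hk
  have hpk : p = finProdFinEquiv.symm (Tuple.sort f k) := by simp [hk]
  by_cases h : N ≤ k.1
  · exfalso
    apply hp
    refine ⟨⟨k.1 - N, by have := k.2; omega⟩, ?_⟩
    refine Eq.trans ?_ hpk.symm
    unfold sel
    congr 2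
    ext; simp; omega
  · have h1 := Tuple.monotone_sort f (a := k) (b := ⟨N + i, by omega⟩) (by
      rw [Fin.le_def]; simp; omega)
    have h2 : y p = (f ∘ Tuple.sort f) k := by rw [hpk]; rfl
    rw [h2]; exact h1

lemma measurable_sel (N : ℕ) : Measurable (fun y : Fin N × Fin 2 → ℝ => sel N y) := by
  let _ : MeasurableSpace (Equiv.Perm (Fin (N*2))) := ⊤
  have : MeasurableSingletonClass (Equiv.Perm (Fin (N*2))) := ⟨fun _ => trivial⟩
  have h0 : Measurable (fun f : Fin (N*2) → ℝ => Tuple.sort f) := by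
    apply measurable_to_countable'
    intro σ
    have : (fun f : Fin (N*2) → ℝ => Tuple.sort f) ⁻¹' {σ} =
      {f | (∀ i j, i ≤ j → f (σ i) ≤ f (σ j)) ∧ ∀ i j, i < j → f (σ i) = f (σ j) → σ i < σ j} := by
      ext f
      simp only [mem_preimage, mem_singleton_iff, mem_ofPred_eq]
      rw [eq_comm, Tuple.eq_sort_iff]
      rfl
    rw [this]
    measurability
  have h1 : (fun y : Fin N × Fin 2 → ℝ => sel N y) =
    (fun s : Equiv.Perm (Fin (N*2)) => fun i : Fin N => (finProdFinEquiv.symm (s ⟨N + i, by omega⟩) : Fin N × Fin 2))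
      ∘ (fun f : Fin (N*2) → ℝ => Tuple.sort f) ∘ (fun y => y ∘ finProdFinEquiv.symm) := rfl
  rw [h1]
  refine (measurable_of_finite _).comp (h0.comp ?_)
  exact measurable_pi_lambda _ fun k => measurable_pi_apply _

/-- ancestor map at step `n` -/
def par (N : ℕ) (jump : ℕ → Fin N → Fin 2 → ℝ) (n : ℕ) (i : Fin N) : Fin N × Fin 2 :=
  sel N (fun p => brw N (fun _ => 0) jump n p.1 + jump n p.1 p.2) i

lemma brw_succ (N : ℕ) (jump : ℕ → Fin N → Fin 2 → ℝ) (n : ℕ) (i : Fin N) :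
    brw N (fun _ => 0) jump (n+1) i = brw N (fun _ => 0) jump n (par N jump n i).1
      + jump n (par N jump n i).1 (par N jump n i).2 := by
  rw [brw, brwStep_eq]; rfl

lemma par_injective (N : ℕ) (jump : ℕ → Fin N → Fin 2 → ℝ) (n : ℕ) :
    Function.Injective (par N jump n) := sel_injective _ _

lemma brw_measurable (N n : ℕ) :
    Measurable (fun jump : ℕ → Fin N → Fin 2 → ℝ => brw N (fun _ => 0) jump n) ∧
    Measurable (fun jump : ℕ → Fin N → Fin 2 → ℝ => par N jump n) := by
  have key : ∀ n, Measurable (fun jump : ℕ → Fin N → Fin 2 → ℝ => brw N (fun _ => 0) jump n) →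
      Measurable (fun jump : ℕ → Fin N → Fin 2 → ℝ => par N jump n) := by
    intro n h
    refine (measurable_sel N).comp (measurable_pi_lambda _ fun p => ?_)
    exact ((measurable_pi_apply p.1).comp h).add (by fun_prop)
  refine (fun h => ⟨h, key n h⟩) ?_
  induction n with
  | zero => simp only [brw]; exact measurable_const
  | succ n ih =>
    refine measurable_pi_lambda _ fun i => ?_
    simp only [brw_succ]
    have hp : Measurable (fun jump : ℕ → Fin N → Fin 2 → ℝ => par N jump n i) :=
      (measurable_pi_apply i).comp (key n ih)
    have hg : Measurable (fun jump : ℕ → Fin N → Fin 2 → ℝ =>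
      fun p : Fin N × Fin 2 => brw N (fun _ => 0) jump n p.1 + jump n p.1 p.2) := by
      refine (measurable_pi_lambda _ fun p => ?_)
      exact ((measurable_pi_apply p.1).comp ih).add (by fun_prop)
    have he : Measurable (fun q : (Fin N × Fin 2 → ℝ) × (Fin N × Fin 2) => q.1 q.2) := by
      apply measurable_from_prod_countable_left
      intro p
      exact measurable_pi_apply p
    exact he.comp (hg.prodMk hp)

lemma brw_congr (N : ℕ) (jump jump' : ℕ → Fin N → Fin 2 → ℝ) (n : ℕ)
    (h : ∀ k < n, jump k = jump' k) :
    brw N (fun _ => 0) jump n = brw N (fun _ => 0) jump' n := by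
  induction n with
  | zero => rfl
  | succ n ih => rw [brw, brw, ih (fun k hk => h k (by omega)), h n (by omega)]

lemma par_congr (N : ℕ) (jump jump' : ℕ → Fin N → Fin 2 → ℝ) (n : ℕ)
    (h : ∀ k < n + 1, jump k = jump' k) : par N jump n = par N jump' n := by
  unfold par
  rw [brw_congr N jump jump' n (fun k hk => h k (by omega)), h n (by omega)]

/-- maximal jump at step `n` -/
def mx (N : ℕ) (jump : ℕ → Fin N → Fin 2 → ℝ) (n : ℕ) : ℝ := ⨆ p : Fin N × Fin 2, jump n p.1 p.2

lemma le_mx (N : ℕ) (jump : ℕ → Fin N → Fin 2 → ℝ) (n : ℕ) (p : Fin N × Fin 2) :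
    jump n p.1 p.2 ≤ mx N jump n :=
  le_ciSup (f := fun p : Fin N × Fin 2 => jump n p.1 p.2) (Set.finite_range _).bddAbove p

lemma le_brwMax (N : ℕ) (jump : ℕ → Fin N → Fin 2 → ℝ) (n : ℕ) (i : Fin N) :
    brw N (fun _ => 0) jump n i ≤ brwMax N jump n :=
  le_ciSup (f := fun i => brw N (fun _ => 0) jump n i) (Set.finite_range _).bddAbove i

lemma brwMin_le (N : ℕ) (jump : ℕ → Fin N → Fin 2 → ℝ) (n : ℕ) (i : Fin N) :
    brwMin N jump n ≤ brw N (fun _ => 0) jump n i :=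
  ciInf_le (f := fun i => brw N (fun _ => 0) jump n i) (Set.finite_range _).bddBelow i

lemma child_le_brwMax (N : ℕ) (hN : 0 < N) (jump : ℕ → Fin N → Fin 2 → ℝ) (n : ℕ)
    (p : Fin N × Fin 2) :
    brw N (fun _ => 0) jump n p.1 + jump n p.1 p.2 ≤ brwMax N jump (n+1) := by
  by_cases hp : p ∈ Set.range (par N jump n)
  · obtain ⟨i, hi⟩ := hp
    have := le_brwMax N jump (n+1) i
    rwa [brw_succ, hi] at this
  · refine (le_of_notMem_sel N (fun p => brw N (fun _ => 0) jump n p.1 + jump n p.1 p.2) p hp ⟨0, hN⟩).trans ?_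
    have := le_brwMax N jump (n+1) ⟨0, hN⟩
    rwa [brw_succ] at this

lemma brwMax_le_succ (N : ℕ) (hN : 0 < N) (jump : ℕ → Fin N → Fin 2 → ℝ)
    (hj : ∀ n i j, 0 ≤ jump n i j) (n : ℕ) : brwMax N jump n ≤ brwMax N jump (n+1) := by
  have : Nonempty (Fin N) := ⟨⟨0, hN⟩⟩
  apply ciSup_le
  intro i
  have := child_le_brwMax N hN jump n (i, 0)
  have := hj n i 0
  simp only at *
  linarith

lemma count_step (N : ℕ) (jump : ℕ → Fin N → Fin 2 → ℝ)
    (hj : ∀ n i j, 0 ≤ jump n i j) (n : ℕ) (y : ℝ) :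
    min N (2 * (Finset.univ.filter fun i => y ≤ brw N (fun _ => 0) jump n i).card) ≤
      (Finset.univ.filter fun i => y ≤ brw N (fun _ => 0) jump (n+1) i).card := by
  by_cases h : ∀ i, y ≤ brw N (fun _ => 0) jump (n+1) i
  · rw [Finset.filter_true_of_mem (fun i _ => h i)]; simp
  · push Not at h
    obtain ⟨i0, hi0⟩ := h
    refine (min_le_right _ _).trans ?_
    have h2 : 2 * (Finset.univ.filter fun i => y ≤ brw N (fun _ => 0) jump n i).card
      = ((Finset.univ.filter fun i => y ≤ brw N (fun _ => 0) jump n i) ×ˢ (Finset.univ : Finset (Fin 2))).card := by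
      rw [Finset.card_product]; simp [mul_comm]
    rw [h2, ← Finset.card_image_of_injective _ (par_injective N jump n)]
    apply Finset.card_le_card
    intro p hp
    simp only [Finset.mem_product, Finset.mem_filter, Finset.mem_univ, true_and, and_true] at hp
    have hy : y ≤ brw N (fun _ => 0) jump n p.1 + jump n p.1 p.2 := by
      have := hj n p.1 p.2; linarith
    have hr : p ∈ Set.range (par N jump n) := by
      by_contra hr
      have := le_of_notMem_sel N (fun p => brw N (fun _ => 0) jump n p.1 + jump n p.1 p.2) p hr i0
      rw [brw_succ] at hi0
      unfold par at hi0
      linarith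
    obtain ⟨i, hi⟩ := hr
    simp only [Finset.mem_image, Finset.mem_filter, Finset.mem_univ, true_and]
    refine ⟨i, ?_, hi⟩
    rw [brw_succ, hi]; exact hy

lemma brwMax_le_brwMin (N : ℕ) (hN : 0 < N) (jump : ℕ → Fin N → Fin 2 → ℝ)
    (hj : ∀ n i j, 0 ≤ jump n i j) (n D : ℕ) (hD : N ≤ 2 ^ D) : brwMax N jump n ≤ brwMin N jump (n + D) := by
  have : Nonempty (Fin N) := ⟨⟨0, hN⟩⟩
  have key : ∀ r, min N (2 ^ r) ≤
      (Finset.univ.filter fun i => brwMax N jump n ≤ brw N (fun _ => 0) jump (n+r) i).card := by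
    intro r
    induction r with
    | zero =>
      obtain ⟨i, hi⟩ := exists_eq_ciSup_of_finite (f := fun i => brw N (fun _ => 0) jump n i)
      refine (min_le_right _ _).trans ?_
      rw [pow_zero, Nat.one_le_iff_ne_zero, ← Nat.pos_iff_ne_zero, Finset.card_pos]
      exact ⟨i, by simp; exact hi.ge⟩
    | succ r ih =>
      refine le_trans ?_ (count_step N jump hj (n + r) _)
      rw [pow_succ]
      omega
  have h1 := key D
  rw [min_eq_left hD] at h1
  have h2 := Finset.eq_univ_of_card _ (le_antisymm (Finset.card_le_univ _) ((Fintype.card_fin N).le.trans h1))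
  apply le_ciInf
  intro i
  have := Finset.mem_univ i
  rw [← h2] at this
  simpa using this

lemma RR_le_brwMax (N : ℕ) (hN : 0 < N) (jump : ℕ → Fin N → Fin 2 → ℝ)
    (hj : ∀ n i j, 0 ≤ jump n i j) (D : ℕ) (hD : N ≤ 2 ^ D) (n : ℕ) : RR D (mx N jump) n ≤ brwMax N jump n := by
  have : Nonempty (Fin N) := ⟨⟨0, hN⟩⟩
  have h0 : brwMax N jump 0 = 0 := by simp [brwMax, brw]
  have hmono : Monotone (brwMax N jump) := monotone_nat_of_le_succ (brwMax_le_succ N hN jump hj)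
  induction n using Nat.strong_induction_on with
  | _ n ih =>
    cases n with
    | zero => rw [RR_zero, h0]
    | succ n =>
      rw [RR_succ]
      apply max_le ((ih n (by omega)).trans (hmono (by omega)))
      obtain ⟨p, hp⟩ := exists_eq_ciSup_of_finite (f := fun p : Fin N × Fin 2 => jump n p.1 p.2)
      have hp' : mx N jump n = jump n p.1 p.2 := hp.symm
      refine le_trans ?_ (child_le_brwMax N hN jump n p)
      rw [hp']
      gcongr
      refine (ih (n - D) (by omega)).trans ?_
      by_cases hnD : D ≤ n
      · have := brwMax_le_brwMin N hN jump hj (n - D) D hD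
        rw [Nat.sub_add_cancel hnD] at this
        exact this.trans (brwMin_le _ _ _ _)
      · rw [show n - D = 0 by omega, h0]
        clear hp hp'
        have : ∀ k i, 0 ≤ brw N (fun _ => 0) jump k i := by
          intro k
          induction k with
          | zero => intro i; simp [brw]
          | succ k ihk => intro i; rw [brw_succ]; exact add_nonneg (ihk _) (hj _ _ _)
        exact this n p.1

/-- small-jump part of the position along the ancestral line -/
def tS (N : ℕ) (a : ℝ) (jump : ℕ → Fin N → Fin 2 → ℝ) : ℕ → Fin N → ℝ
  | 0 => fun _ => 0
  | n + 1 => fun i => tS N a jump n (par N jump n i).1 +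
      (if jump n (par N jump n i).1 (par N jump n i).2 ≤ a then
        jump n (par N jump n i).1 (par N jump n i).2 else 0)

/-- time since the last big jump along the ancestral line (initially `D`) -/
def tAge (N D : ℕ) (a : ℝ) (jump : ℕ → Fin N → Fin 2 → ℝ) : ℕ → Fin N → ℕ
  | 0 => fun _ => D
  | n + 1 => fun i =>
      if jump n (par N jump n i).1 (par N jump n i).2 ≤ a then
        tAge N D a jump n (par N jump n i).1 + 1 else 0

/-- sum of big jumps made at age at least `D` along the ancestral line -/
def tB (N D : ℕ) (a : ℝ) (jump : ℕ → Fin N → Fin 2 → ℝ) : ℕ → Fin N → ℝ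
  | 0 => fun _ => 0
  | n + 1 => fun i => tB N D a jump n (par N jump n i).1 +
      (if a < jump n (par N jump n i).1 (par N jump n i).2 ∧
          D ≤ tAge N D a jump n (par N jump n i).1 then
        jump n (par N jump n i).1 (par N jump n i).2 else 0)

/-- total size of big jumps made by young particles at step `n` -/
def tY (N D : ℕ) (a : ℝ) (jump : ℕ → Fin N → Fin 2 → ℝ) (n : ℕ) : ℝ :=
  ∑ p : Fin N × Fin 2, if a < jump n p.1 p.2 ∧ tAge N D a jump n p.1 < D then
        jump n p.1 p.2 else 0

lemma measurable_apply_fst {N : ℕ} {J β : Type*} [MeasurableSpace J] [MeasurableSpace β]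
    {f : J → Fin N → β} {g : J → Fin N × Fin 2} (hf : Measurable f) (hg : Measurable g) :
    Measurable (fun x => f x (g x).1) := by
  have he : Measurable (fun q : (Fin N → β) × (Fin N × Fin 2) => q.1 q.2.1) := by
    apply measurable_from_prod_countable_left
    intro p
    exact measurable_pi_apply p.1
  exact he.comp (hf.prodMk hg)

lemma measurable_jump_par (N n : ℕ) (i : Fin N) :
    Measurable (fun jump : ℕ → Fin N → Fin 2 → ℝ =>
      jump n (par N jump n i).1 (par N jump n i).2) := by
  have he : Measurable (fun q : (Fin N → Fin 2 → ℝ) × (Fin N × Fin 2) => q.1 q.2.1 q.2.2) := by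
    apply measurable_from_prod_countable_left
    intro p
    simp only
    fun_prop
  exact he.comp ((measurable_pi_apply n).prodMk
    ((measurable_pi_apply i).comp (brw_measurable N n).2))

lemma measurable_tS (N : ℕ) (a : ℝ) (n : ℕ) :
    Measurable (fun jump : ℕ → Fin N → Fin 2 → ℝ => tS N a jump n) := by
  induction n with
  | zero => simp only [tS]; exact measurable_const
  | succ n ih =>
    refine measurable_pi_lambda _ fun i => ?_
    simp only [tS]
    refine (measurable_apply_fst ih ((measurable_pi_apply i).comp (brw_measurable N n).2)).add ?_
    exact Measurable.ite (measurableSet_le (measurable_jump_par N n i) measurable_const)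
      (measurable_jump_par N n i) measurable_const

lemma measurable_tAge (N D : ℕ) (a : ℝ) (n : ℕ) :
    Measurable (fun jump : ℕ → Fin N → Fin 2 → ℝ => tAge N D a jump n) := by
  induction n with
  | zero => simp only [tAge]; exact measurable_const
  | succ n ih =>
    refine measurable_pi_lambda _ fun i => ?_
    simp only [tAge]
    exact Measurable.ite (measurableSet_le (measurable_jump_par N n i) measurable_const)
      ((measurable_apply_fst ih ((measurable_pi_apply i).comp (brw_measurable N n).2)).add_const 1)
      measurable_const

lemma tS_congr (N : ℕ) (a : ℝ) (jump jump' : ℕ → Fin N → Fin 2 → ℝ) (n : ℕ)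
    (h : ∀ k < n, jump k = jump' k) : tS N a jump n = tS N a jump' n := by
  induction n with
  | zero => rfl
  | succ n ih =>
    simp only [tS]
    rw [ih (fun k hk => h k (by omega)), par_congr N jump jump' n h, h n (by omega)]

lemma tAge_congr (N D : ℕ) (a : ℝ) (jump jump' : ℕ → Fin N → Fin 2 → ℝ) (n : ℕ)
    (h : ∀ k < n, jump k = jump' k) : tAge N D a jump n = tAge N D a jump' n := by
  induction n with
  | zero => rfl
  | succ n ih =>
    simp only [tAge]
    rw [ih (fun k hk => h k (by omega)), par_congr N jump jump' n h, h n (by omega)]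

lemma brw_le_tags (N D : ℕ) (a : ℝ) (jump : ℕ → Fin N → Fin 2 → ℝ)
    (hj : ∀ n i j, 0 ≤ jump n i j) (n : ℕ) (i : Fin N) :
    brw N (fun _ => 0) jump n i ≤ tS N a jump n i + tB N D a jump n i
      + ∑ k ∈ Finset.range n, tY N D a jump k := by
  induction n generalizing i with
  | zero => simp [brw, tS, tB]
  | succ n ih =>
    rw [brw_succ, Finset.sum_range_succ]
    simp only [tS, tB]
    have h1 := ih (par N jump n i).1
    have h2 : (if a < jump n (par N jump n i).1 (par N jump n i).2 ∧
        tAge N D a jump n (par N jump n i).1 < D then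
        jump n (par N jump n i).1 (par N jump n i).2 else 0) ≤ tY N D a jump n := by
      unfold tY
      exact Finset.single_le_sum (f := fun p : Fin N × Fin 2 =>
        if a < jump n p.1 p.2 ∧ tAge N D a jump n p.1 < D then jump n p.1 p.2 else 0)
        (fun p _ => by split_ifs; exacts [hj _ _ _, le_rfl]) (Finset.mem_univ (par N jump n i))
    by_cases hs : jump n (par N jump n i).1 (par N jump n i).2 ≤ a
    · simp only [hs, not_lt.2 hs, false_and, if_true, if_false] at h2 ⊢
      linarith
    · rw [if_neg hs]
      by_cases hy : tAge N D a jump n (par N jump n i).1 < D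
      · rw [if_pos ⟨lt_of_not_ge hs, hy⟩] at h2
        rw [if_neg (by rw [not_and]; intro _; omega)]
        linarith
      · rw [if_neg (by tauto)] at h2
        rw [if_pos ⟨lt_of_not_ge hs, by omega⟩]
        linarith

lemma tB_le (N D : ℕ) (a : ℝ) (jump : ℕ → Fin N → Fin 2 → ℝ) (n : ℕ) (i : Fin N) :
    tB N D a jump n i ≤ RR D (mx N jump) (n - tAge N D a jump n i) := by
  induction n generalizing i with
  | zero => simp [tB, RR_zero]
  | succ n ih =>
    have h1 := ih (par N jump n i).1
    simp only [tB, tAge]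
    by_cases hs : jump n (par N jump n i).1 (par N jump n i).2 ≤ a
    · simp only [hs, not_lt.2 hs, false_and, if_true, if_false]
      rw [Nat.add_sub_add_right, add_zero]
      exact h1
    · rw [if_neg hs, Nat.sub_zero, RR_succ]
      by_cases hy : tAge N D a jump n (par N jump n i).1 < D
      · rw [if_neg (by rw [not_and]; intro _; omega), add_zero]
        exact (h1.trans (RR_mono _ _ (by omega))).trans (le_max_left _ _)
      · rw [if_pos ⟨lt_of_not_ge hs, by omega⟩]
        refine le_trans ?_ (le_max_right _ _)
        have := le_mx N jump n (par N jump n i)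
        have := RR_mono D (mx N jump) (show n - tAge N D a jump n (par N jump n i).1 ≤ n - D by omega)
        linarith

lemma sum_par_le (N : ℕ) (jump : ℕ → Fin N → Fin 2 → ℝ) (n : ℕ) (φ : Fin N × Fin 2 → ENNReal) :
    ∑ i, φ (par N jump n i) ≤ ∑ p, φ p := by
  rw [← Finset.sum_image (s := Finset.univ) (g := par N jump n) (f := φ)
    (fun i _ j _ h => par_injective N jump n h)]
  exact Finset.sum_le_sum_of_subset (Finset.subset_univ _)

/-- number of particles of age `r` -/
def tC (N D : ℕ) (a : ℝ) (r : ℕ) (jump : ℕ → Fin N → Fin 2 → ℝ) (n : ℕ) : ENNReal :=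
  ∑ i, if tAge N D a jump n i = r then 1 else 0

lemma tC_succ (N D : ℕ) (a : ℝ) (r : ℕ) (jump : ℕ → Fin N → Fin 2 → ℝ) (n : ℕ) :
    tC N D a (r+1) jump (n+1) ≤ 2 * tC N D a r jump n := by
  unfold tC
  calc (∑ i, if tAge N D a jump (n+1) i = r + 1 then (1:ENNReal) else 0)
      ≤ ∑ i, if tAge N D a jump n (par N jump n i).1 = r then (1:ENNReal) else 0 := by
        apply Finset.sum_le_sum
        intro i _
        simp only [tAge]
        split_ifs <;> simp_all
    _ ≤ ∑ p : Fin N × Fin 2, if tAge N D a jump n p.1 = r then (1:ENNReal) else 0 :=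
        sum_par_le N jump n (fun p => if tAge N D a jump n p.1 = r then (1:ENNReal) else 0)
    _ = _ := by
        rw [Fintype.sum_prod_type, Finset.mul_sum]
        refine Finset.sum_congr rfl fun i _ => ?_
        rw [Fin.sum_univ_two, two_mul]

lemma tC_zero (N D : ℕ) (a : ℝ) (jump : ℕ → Fin N → Fin 2 → ℝ) (n : ℕ) :
    tC N D a 0 jump (n+1) ≤ ∑ p : Fin N × Fin 2, if a < jump n p.1 p.2 then (1:ENNReal) else 0 := by
  unfold tC
  refine le_trans ?_ (sum_par_le N jump n (fun p => if a < jump n p.1 p.2 then (1:ENNReal) else 0))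
  apply Finset.sum_le_sum
  intro i _
  simp only [tAge]
  by_cases hs : jump n (par N jump n i).1 (par N jump n i).2 ≤ a
  · simp [hs]
  · simp [hs, lt_of_not_ge hs]

lemma tS_exp_succ (N : ℕ) (a c : ℝ) (jump : ℕ → Fin N → Fin 2 → ℝ) (n : ℕ) :
    ∑ i, ENNReal.ofReal (Real.exp (c * tS N a jump (n+1) i)) ≤
     ∑ p : Fin N × Fin 2, ENNReal.ofReal (Real.exp (c * tS N a jump n p.1)) *
      ENNReal.ofReal (Real.exp (c * (if jump n p.1 p.2 ≤ a then jump n p.1 p.2 else 0))) := by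
  refine le_trans (le_of_eq ?_) (sum_par_le N jump n (fun p => _))
  apply Finset.sum_congr rfl
  intro i _
  rw [← ENNReal.ofReal_mul (Real.exp_pos _).le, ← Real.exp_add, ← mul_add]
  rfl

/-- the probabilistic setup for fixed `N` -/
structure Setup {Ω : Type} [MeasurableSpace Ω] (P : Measure Ω) (X : Ω → ℝ) (N : ℕ)
    (ξ : ℕ → Fin N → Fin 2 → Ω → ℝ) : Prop where
  hX : Measurable X
  hX0 : ∀ ω, 0 ≤ X ω
  hm : ∀ n i j, Measurable (ξ n i j)
  h0 : ∀ n i j ω, 0 ≤ ξ n i j ω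
  hlaw : ∀ n i j, Measure.map (ξ n i j) P = Measure.map X P
  hind : iIndepFun (fun p : ℕ × Fin N × Fin 2 => ξ p.1 p.2.1 p.2.2) P

/-- the jump array at a sample point -/
def jmp {Ω : Type} {N : ℕ} (ξ : ℕ → Fin N → Fin 2 → Ω → ℝ) (ω : Ω) : ℕ → Fin N → Fin 2 → ℝ :=
  fun k i j => ξ k i j ω

lemma Setup.measurable_jmp {Ω : Type} [MeasurableSpace Ω] {P : Measure Ω} {X : Ω → ℝ} {N : ℕ}
    {ξ : ℕ → Fin N → Fin 2 → Ω → ℝ} (h : Setup P X N ξ) : Measurable (jmp ξ) := by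
  refine measurable_pi_lambda _ fun k => measurable_pi_lambda _ fun i => measurable_pi_lambda _ fun j => ?_
  exact h.hm k i j

lemma Setup.indep_past {Ω : Type} [MeasurableSpace Ω] {P : Measure Ω} {X : Ω → ℝ} {N : ℕ}
    {ξ : ℕ → Fin N → Fin 2 → Ω → ℝ} (h : Setup P X N ξ) {β : Type*} [MeasurableSpace β]
    (F : (ℕ → Fin N → Fin 2 → ℝ) → β) (hF : Measurable F) (n : ℕ)
    (hc : ∀ J J' : ℕ → Fin N → Fin 2 → ℝ, (∀ k < n, J k = J' k) → F J = F J') (i : Fin N) (j : Fin 2) :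
    IndepFun (fun ω => F (jmp ξ ω)) (ξ n i j) P := by
  classical
  set S : Finset (ℕ × Fin N × Fin 2) := Finset.range n ×ˢ Finset.univ with hS
  set T : Finset (ℕ × Fin N × Fin 2) := {(n, i, j)} with hT
  have hd : Disjoint S T := by
    rw [Finset.disjoint_singleton_right]
    simp [hS]
  have h1 := h.hind.indepFun_finset S T hd (fun p => h.hm _ _ _)
  have hφ : Measurable (fun g : S → ℝ => F (fun k i j => if hh : (k, i, j) ∈ S then g ⟨_, hh⟩ else 0)) := by
    apply hF.comp
    refine measurable_pi_lambda _ fun k => measurable_pi_lambda _ fun i => measurable_pi_lambda _ fun j => ?_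
    by_cases hh : (k, i, j) ∈ S
    · simp only [hh, dite_true]; exact measurable_pi_apply _
    · simp only [hh, dite_false]; exact measurable_const
  have h2 := h1.comp hφ (measurable_pi_apply (⟨(n, i, j), by simp [hT]⟩ : T))
  have e1 : (fun ω => F (jmp ξ ω)) = (fun g : S → ℝ => F (fun k i j => if hh : (k, i, j) ∈ S then g ⟨_, hh⟩ else 0)) ∘
      (fun ω (p : S) => ξ p.1.1 p.1.2.1 p.1.2.2 ω) := by
    funext ω
    simp only [Function.comp]
    apply hc
    intro k hk
    funext i j
    simp [hS, hk, jmp]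
  rw [e1]
  exact h2

lemma Setup.lintegral_law {Ω : Type} [MeasurableSpace Ω] {P : Measure Ω} {X : Ω → ℝ} {N : ℕ}
    {ξ : ℕ → Fin N → Fin 2 → Ω → ℝ} (h : Setup P X N ξ) (f : ℝ → ENNReal) (hf : Measurable f)
    (n : ℕ) (i : Fin N) (j : Fin 2) : ∫⁻ ω, f (ξ n i j ω) ∂P = ∫⁻ ω, f (X ω) ∂P := by
  rw [← lintegral_map hf (h.hm n i j), h.hlaw, lintegral_map hf h.hX]

lemma Setup.lintegral_past_mul {Ω : Type} [MeasurableSpace Ω] {P : Measure Ω} {X : Ω → ℝ} {N : ℕ}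
    {ξ : ℕ → Fin N → Fin 2 → Ω → ℝ} (h : Setup P X N ξ)
    (F : (ℕ → Fin N → Fin 2 → ℝ) → ENNReal) (hF : Measurable F) (n : ℕ)
    (hc : ∀ J J' : ℕ → Fin N → Fin 2 → ℝ, (∀ k < n, J k = J' k) → F J = F J')
    (f : ℝ → ENNReal) (hf : Measurable f) (i : Fin N) (j : Fin 2) :
    ∫⁻ ω, F (jmp ξ ω) * f (ξ n i j ω) ∂P = (∫⁻ ω, F (jmp ξ ω) ∂P) * ∫⁻ ω, f (X ω) ∂P := by
  have h1 : IndepFun (fun ω => F (jmp ξ ω)) (f ∘ ξ n i j) P :=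
    (h.indep_past F hF n hc i j).comp measurable_id hf
  have := lintegral_mul_eq_lintegral_mul_lintegral_of_indepFun (hF.comp h.measurable_jmp)
    (hf.comp (h.hm n i j)) h1
  rw [← h.lintegral_law f hf n i j]
  exact this

lemma Setup.exp_bound {Ω : Type} [MeasurableSpace Ω] {P : Measure Ω} [IsProbabilityMeasure P] {X : Ω → ℝ} {N : ℕ}
    {ξ : ℕ → Fin N → Fin 2 → Ω → ℝ} (h : Setup P X N ξ) (a c : ℝ) (G : ENNReal)
    (hG : ∫⁻ ω, ENNReal.ofReal (Real.exp (c * (if X ω ≤ a then X ω else 0))) ∂P ≤ G) (n : ℕ) :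
    ∫⁻ ω, ∑ i, ENNReal.ofReal (Real.exp (c * tS N a (jmp ξ ω) n i)) ∂P ≤ N * (2 * G) ^ n := by
  have hmS : ∀ n i, Measurable (fun J : ℕ → Fin N → Fin 2 → ℝ => ENNReal.ofReal (Real.exp (c * tS N a J n i))) := by
    intro n i
    have := (measurable_pi_apply i).comp (measurable_tS N a n)
    simp only [Function.comp_def] at this
    fun_prop
  have hf : Measurable (fun x : ℝ => ENNReal.ofReal (Real.exp (c * (if x ≤ a then x else 0)))) := by
    have : Measurable (fun x : ℝ => if x ≤ a then x else 0) :=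
      Measurable.ite measurableSet_Iic measurable_id measurable_const
    fun_prop
  induction n with
  | zero => simp [tS]
  | succ n ih =>
    calc ∫⁻ ω, ∑ i, ENNReal.ofReal (Real.exp (c * tS N a (jmp ξ ω) (n+1) i)) ∂P
        ≤ ∫⁻ ω, ∑ p : Fin N × Fin 2, ENNReal.ofReal (Real.exp (c * tS N a (jmp ξ ω) n p.1)) *
      ENNReal.ofReal (Real.exp (c * (if ξ n p.1 p.2 ω ≤ a then ξ n p.1 p.2 ω else 0))) ∂P :=
          lintegral_mono fun ω => tS_exp_succ N a c (jmp ξ ω) n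
      _ = ∑ p : Fin N × Fin 2, ∫⁻ ω, ENNReal.ofReal (Real.exp (c * tS N a (jmp ξ ω) n p.1)) *
      ENNReal.ofReal (Real.exp (c * (if ξ n p.1 p.2 ω ≤ a then ξ n p.1 p.2 ω else 0))) ∂P := by
          rw [lintegral_finsetSum]
          intro p _
          exact ((hmS n p.1).comp h.measurable_jmp).mul (hf.comp (h.hm _ _ _))
      _ = ∑ p : Fin N × Fin 2, (∫⁻ ω, ENNReal.ofReal (Real.exp (c * tS N a (jmp ξ ω) n p.1)) ∂P) *
            ∫⁻ ω, ENNReal.ofReal (Real.exp (c * (if X ω ≤ a then X ω else 0))) ∂P := by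
          apply Finset.sum_congr rfl
          intro p _
          exact h.lintegral_past_mul (fun J => ENNReal.ofReal (Real.exp (c * tS N a J n p.1))) (hmS n p.1) n
            (fun J J' hJ => by rw [tS_congr N a J J' n hJ]) _ hf p.1 p.2
      _ ≤ ∑ p : Fin N × Fin 2, (∫⁻ ω, ENNReal.ofReal (Real.exp (c * tS N a (jmp ξ ω) n p.1)) ∂P) * G := by
          gcongr
      _ = (∫⁻ ω, ∑ i, ENNReal.ofReal (Real.exp (c * tS N a (jmp ξ ω) n i)) ∂P) * (2 * G) := by
          have e : ∫⁻ ω, ∑ i, ENNReal.ofReal (Real.exp (c * tS N a (jmp ξ ω) n i)) ∂P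
              = ∑ i, ∫⁻ ω, ENNReal.ofReal (Real.exp (c * tS N a (jmp ξ ω) n i)) ∂P :=
            lintegral_finsetSum _ (fun i _ => (hmS n i).comp h.measurable_jmp)
          rw [e, Fintype.sum_prod_type, Finset.sum_mul]
          refine Finset.sum_congr rfl fun i _ => ?_
          rw [Fin.sum_univ_two]; ring
      _ ≤ N * (2 * G) ^ n * (2 * G) := by gcongr
      _ = _ := by ring

lemma Setup.tC_bound {Ω : Type} [MeasurableSpace Ω] {P : Measure Ω} [IsProbabilityMeasure P] {X : Ω → ℝ} {N : ℕ}
    {ξ : ℕ → Fin N → Fin 2 → Ω → ℝ} (h : Setup P X N ξ) (D : ℕ) (a : ℝ) (n r : ℕ) (hr : r < D) :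
    ∫⁻ ω, tC N D a r (jmp ξ ω) n ∂P ≤ 2 * N * P {ω | a < X ω} * 2 ^ r := by
  have hX := h.hX
  have hg : Measurable (fun x : ℝ => if a < x then (1:ENNReal) else 0) :=
    Measurable.ite measurableSet_Ioi measurable_const measurable_const
  induction n generalizing r with
  | zero =>
    have : ∀ ω, tC N D a r (jmp ξ ω) 0 = 0 := by
      intro ω; have hne : D ≠ r := by omega
      simp [tC, tAge, hne]
    simp [this]
  | succ n ih =>
    cases r with
    | zero =>
      calc ∫⁻ ω, tC N D a 0 (jmp ξ ω) (n+1) ∂P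
          ≤ ∫⁻ ω, ∑ p : Fin N × Fin 2, (if a < ξ n p.1 p.2 ω then (1:ENNReal) else 0) ∂P :=
            lintegral_mono fun ω => tC_zero N D a (jmp ξ ω) n
        _ = ∑ p : Fin N × Fin 2, ∫⁻ ω, (if a < ξ n p.1 p.2 ω then (1:ENNReal) else 0) ∂P := by
            rw [lintegral_finsetSum]
            intro p _
            exact hg.comp (h.hm _ _ _)
        _ = ∑ p : Fin N × Fin 2, P {ω | a < X ω} := by
            refine Finset.sum_congr rfl fun p _ => ?_
            have := h.lintegral_law (fun x : ℝ => if a < x then (1:ENNReal) else 0) hg n p.1 p.2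
            rw [this, ← lintegral_indicator_one (measurableSet_lt measurable_const hX)]
            rfl
        _ ≤ _ := by
            simp; apply le_of_eq; ring
    | succ r =>
      calc ∫⁻ ω, tC N D a (r+1) (jmp ξ ω) (n+1) ∂P
          ≤ ∫⁻ ω, 2 * tC N D a r (jmp ξ ω) n ∂P :=
            lintegral_mono fun ω => tC_succ N D a r (jmp ξ ω) n
        _ = 2 * ∫⁻ ω, tC N D a r (jmp ξ ω) n ∂P := lintegral_const_mul' _ _ (by simp)
        _ ≤ 2 * (2 * N * P {ω | a < X ω} * 2 ^ r) := by gcongr; exact ih r (by omega)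
        _ = _ := by ring

lemma Setup.young_bound {Ω : Type} [MeasurableSpace Ω] {P : Measure Ω} [IsProbabilityMeasure P] {X : Ω → ℝ} {N : ℕ}
    {ξ : ℕ → Fin N → Fin 2 → Ω → ℝ} (h : Setup P X N ξ) (D : ℕ) (a : ℝ) (n : ℕ) :
    ∫⁻ ω, ∑ i, (if tAge N D a (jmp ξ ω) n i < D then (1:ENNReal) else 0) ∂P
      ≤ 2 * N * P {ω | a < X ω} * 2 ^ D := by
  have hmA : ∀ i, Measurable (fun J : ℕ → Fin N → Fin 2 → ℝ => tAge N D a J n i) := fun i =>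
    (measurable_pi_apply i).comp (measurable_tAge N D a n)
  have e1 : ∀ ω, ∑ i, (if tAge N D a (jmp ξ ω) n i < D then (1:ENNReal) else 0)
      = ∑ r ∈ Finset.range D, tC N D a r (jmp ξ ω) n := by
    intro ω
    unfold tC
    rw [Finset.sum_comm]
    refine Finset.sum_congr rfl fun i _ => ?_
    rw [Finset.sum_ite_eq]; simp
  simp_rw [e1]
  rw [lintegral_finsetSum]
  · calc ∑ r ∈ Finset.range D, ∫⁻ ω, tC N D a r (jmp ξ ω) n ∂P
        ≤ ∑ r ∈ Finset.range D, 2 * N * P {ω | a < X ω} * 2 ^ r :=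
          Finset.sum_le_sum fun r hr => h.tC_bound D a n r (Finset.mem_range.1 hr)
      _ = 2 * N * P {ω | a < X ω} * ∑ r ∈ Finset.range D, 2 ^ r := by rw [Finset.mul_sum]
      _ ≤ _ := by
        gcongr
        have := Nat.geomSum_lt (m := 2) (n := D) (s := Finset.range D) le_rfl (by simp)
        exact_mod_cast this.le
  · intro r _
    unfold tC
    refine Finset.measurable_sum _ fun i _ => ?_
    exact Measurable.ite (measurableSet_eq_fun ((hmA i).comp h.measurable_jmp) measurable_const) measurable_const measurable_const

lemma Setup.tY_bound {Ω : Type} [MeasurableSpace Ω] {P : Measure Ω} [IsProbabilityMeasure P] {X : Ω → ℝ} {N : ℕ}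
    {ξ : ℕ → Fin N → Fin 2 → Ω → ℝ} (h : Setup P X N ξ) (D : ℕ) (a : ℝ) (n : ℕ) :
    ∫⁻ ω, ENNReal.ofReal (tY N D a (jmp ξ ω) n) ∂P
      ≤ 2 * (2 * N * P {ω | a < X ω} * 2 ^ D) *
        ∫⁻ ω, ENNReal.ofReal (if a < X ω then X ω else 0) ∂P := by
  have hmA : ∀ i, Measurable (fun J : ℕ → Fin N → Fin 2 → ℝ => (if tAge N D a J n i < D then (1:ENNReal) else 0)) := fun i =>
    Measurable.ite (measurableSet_lt ((measurable_pi_apply i).comp (measurable_tAge N D a n)) measurable_const) measurable_const measurable_const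
  have hf : Measurable (fun x : ℝ => ENNReal.ofReal (if a < x then x else 0)) :=
    ENNReal.measurable_ofReal.comp (Measurable.ite measurableSet_Ioi measurable_id measurable_const)
  have e1 : ∀ ω, ENNReal.ofReal (tY N D a (jmp ξ ω) n) ≤ ∑ p : Fin N × Fin 2,
      (if tAge N D a (jmp ξ ω) n p.1 < D then (1:ENNReal) else 0) * ENNReal.ofReal (if a < ξ n p.1 p.2 ω then ξ n p.1 p.2 ω else 0) := by
    intro ω
    unfold tY
    rw [ENNReal.ofReal_sum_of_nonneg]
    · refine Finset.sum_le_sum fun p _ => ?_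
      by_cases h1 : tAge N D a (jmp ξ ω) n p.1 < D
      · simp [h1, jmp]
      · simp [h1]
    · intro p _
      split_ifs
      exacts [h.h0 _ _ _ _, le_rfl]
  refine (lintegral_mono e1).trans ?_
  rw [lintegral_finsetSum]
  · calc ∑ p : Fin N × Fin 2, ∫⁻ ω, (if tAge N D a (jmp ξ ω) n p.1 < D then (1:ENNReal) else 0) * ENNReal.ofReal (if a < ξ n p.1 p.2 ω then ξ n p.1 p.2 ω else 0) ∂P
        = ∑ p : Fin N × Fin 2, (∫⁻ ω, (if tAge N D a (jmp ξ ω) n p.1 < D then (1:ENNReal) else 0) ∂P) *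
          ∫⁻ ω, ENNReal.ofReal (if a < X ω then X ω else 0) ∂P := by
          refine Finset.sum_congr rfl fun p _ => ?_
          exact h.lintegral_past_mul (fun J => if tAge N D a J n p.1 < D then (1:ENNReal) else 0) (hmA p.1) n
            (fun J J' hJ => by rw [tAge_congr N D a J J' n hJ]) _ hf p.1 p.2
      _ = 2 * (∫⁻ ω, ∑ i, (if tAge N D a (jmp ξ ω) n i < D then (1:ENNReal) else 0) ∂P) *
          ∫⁻ ω, ENNReal.ofReal (if a < X ω then X ω else 0) ∂P := by
          have e : ∫⁻ ω, ∑ i, (if tAge N D a (jmp ξ ω) n i < D then (1:ENNReal) else 0) ∂P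
              = ∑ i, ∫⁻ ω, (if tAge N D a (jmp ξ ω) n i < D then (1:ENNReal) else 0) ∂P :=
            lintegral_finsetSum _ (fun i _ => (hmA i).comp h.measurable_jmp)
          rw [e, Fintype.sum_prod_type, Finset.mul_sum, Finset.sum_mul]
          refine Finset.sum_congr rfl fun i _ => ?_
          rw [Fin.sum_univ_two]; ring
      _ ≤ _ := by
          gcongr
          exact h.young_bound D a n
  · intro p _
    exact ((hmA p.1).comp h.measurable_jmp).mul (hf.comp (h.hm _ _ _))

/-- iid family -/
structure IIDs {Ω ι : Type*} [MeasurableSpace Ω] (P : Measure Ω) (M : ι → Ω → ℝ) (μ : Measure ℝ) : Prop where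
  hm : ∀ i, Measurable (M i)
  hind : iIndepFun M P
  hlaw : ∀ i, P.map (M i) = μ

lemma IIDs.precomp {Ω ι κ : Type*} [MeasurableSpace Ω] {P : Measure Ω} {M : ι → Ω → ℝ} {μ : Measure ℝ}
    (h : IIDs P M μ) (g : κ → ι) (hg : Function.Injective g) : IIDs P (fun k => M (g k)) μ :=
  ⟨fun _ => h.hm _, h.hind.precomp hg, fun _ => h.hlaw _⟩

lemma IIDs.map_eq {Ω ι : Type*} [MeasurableSpace Ω] {P : Measure Ω} {M : ι → Ω → ℝ} {μ : Measure ℝ}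
    (h : IIDs P M μ) : P.map (fun ω i => M i ω) = Measure.infinitePi (fun _ : ι => μ) := by
  rw [h.hind.map_fun_eq_infinitePi_map h.hm]
  simp_rw [h.hlaw]

lemma IIDs.group {Ω ι κ : Type*} [MeasurableSpace Ω] {P : Measure Ω} [IsProbabilityMeasure P]
    {Y : ι × κ → Ω → ℝ} {ν : Measure ℝ} [IsProbabilityMeasure ν]
    (h : IIDs P Y ν) (f : (κ → ℝ) → ℝ) (hf : Measurable f) :
    IIDs P (fun i ω => f (fun j => Y (i, j) ω)) ((Measure.infinitePi fun _ : κ => ν).map f) := by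
  have hm : ∀ i, Measurable (fun ω => f (fun j => Y (i, j) ω)) := fun i =>
    hf.comp (measurable_pi_lambda _ fun j => h.hm _)
  have hp : IsProbabilityMeasure ((Measure.infinitePi fun _ : κ => ν).map f) :=
    Measure.isProbabilityMeasure_map hf.aemeasurable
  have key : P.map (fun ω i => f (fun j => Y (i, j) ω)) =
      Measure.infinitePi (fun _ : ι => (Measure.infinitePi fun _ : κ => ν).map f) := by
    have h1 := h.map_eq
    have h2 := Measure.infinitePi_map_curry (fun (_ : ι) (_ : κ) => ν)
    have h3 := Measure.infinitePi_map_pi (μ := fun _ : ι => Measure.infinitePi fun _ : κ => ν) (f := fun _ => f) (fun _ => hf)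
    rw [← h3, ← h2, ← h1]
    have mg : Measurable (fun (x : ι → κ → ℝ) i => f (x i)) :=
      measurable_pi_lambda _ fun i => hf.comp (measurable_pi_apply i)
    have mY : Measurable (fun ω p => Y p ω) := measurable_pi_lambda _ fun p => h.hm p
    have mc := (MeasurableEquiv.curry ι κ ℝ).measurable
    rw [Measure.map_map mc mY, Measure.map_map mg (mc.comp mY)]
    rfl
  have key2 : ∀ i, P.map (fun ω => f (fun j => Y (i, j) ω)) = ((Measure.infinitePi fun _ : κ => ν).map f) := by
    intro i
    have := congrArg (Measure.map (fun x : ι → ℝ => x i)) key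
    rw [Measure.map_map (measurable_pi_apply i) (measurable_pi_lambda _ hm)] at this
    have h4 := (measurePreserving_eval_infinitePi (fun _ : ι => (Measure.infinitePi fun _ : κ => ν).map f) i).map_eq
    exact this.trans h4
  refine ⟨hm, ?_, key2⟩
  rw [iIndepFun_iff_map_fun_eq_infinitePi_map hm, key]
  congr 1
  funext i
  exact (key2 i).symm

/-- expected delay recursion -/
def Phi (d k : ℕ) (μ : Measure ℝ) : ℝ := ∫ x, RR d x k ∂(Measure.infinitePi (fun _ : ℕ => μ))

lemma IIDs.integral_RR {Ω : Type*} [MeasurableSpace Ω] {P : Measure Ω} {M : ℕ → Ω → ℝ} {μ : Measure ℝ}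
    (h : IIDs P M μ) (d k : ℕ) : ∫ ω, RR d (fun i => M i ω) k ∂P = Phi d k μ := by
  unfold Phi
  rw [← h.map_eq, integral_map (measurable_pi_lambda _ h.hm).aemeasurable]
  exact (measurable_RR d k).aestronglyMeasurable

lemma integrable_RR {Ω : Type*} [MeasurableSpace Ω] {P : Measure Ω} {M : ℕ → Ω → ℝ}
    (hm : ∀ i, Measurable (M i)) (h0 : ∀ i ω, 0 ≤ M i ω) (hi : ∀ i, Integrable (M i) P) (d k : ℕ) :
    Integrable (fun ω => RR d (fun i => M i ω) k) P := by
  refine Integrable.mono' (g := fun ω => ∑ i ∈ Finset.range k, M i ω) (integrable_finsetSum _ fun i _ => hi i) ?_ ?_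
  · exact ((measurable_RR d k).comp (measurable_pi_lambda _ hm)).aestronglyMeasurable
  · refine Eventually.of_forall fun ω => ?_
    rw [Real.norm_of_nonneg (RR_nonneg _ _ _)]
    exact RR_le_sum d _ (fun i => h0 i ω) k

lemma RR_super_sum (d k : ℕ) (x : ℕ → ℝ) (j : ℕ) :
    ∑ i ∈ Finset.range j, RR d (fun r => x (i * (k + d) + r)) k ≤ RR d x (j * (k + d)) := by
  cases j with
  | zero => simp [RR_zero]
  | succ j =>
    have : ∑ i ∈ Finset.range (j+1), RR d (fun r => x (i * (k + d) + r)) k ≤ RR d x (j * (k + d) + k) := by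
      induction j with
      | zero => simp
      | succ j ih =>
        rw [Finset.sum_range_succ]
        have h1 := RR_superadd d x (j * (k+d) + k) k
        have e1 : j * (k+d) + k + d = (j+1) * (k+d) := by ring
        rw [e1] at h1
        linarith
    refine this.trans (RR_mono d x ?_)
    nlinarith

lemma RR_sub_sum (d k : ℕ) (x : ℕ → ℝ) (j : ℕ) :
    RR d x (j * k) ≤ ∑ i ∈ Finset.range j, RR d (fun r => x (i * k + r)) k := by
  induction j with
  | zero => simp [RR_zero]
  | succ j ih =>
    rw [Finset.sum_range_succ, add_mul, one_mul]
    have h1 := RR_subadd d x (j * k) k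
    linarith

lemma IIDs.slln {Ω : Type*} [MeasurableSpace Ω] {P : Measure Ω} [IsProbabilityMeasure P] {M : ℕ → Ω → ℝ} {μ : Measure ℝ}
    [IsProbabilityMeasure μ]
    (h : IIDs P M μ) (h0 : ∀ i ω, 0 ≤ M i ω) (hi : ∀ i, Integrable (M i) P) (d k : ℕ) (hk : 1 ≤ k) :
    ∀ᵐ ω ∂P, Tendsto (fun j : ℕ => (∑ i ∈ Finset.range j, RR d (fun r => M (i * (k+d) + r) ω) k) / j) atTop
      (nhds (Phi d k μ)) := by
  classical
  have hpos : 0 < k + d := by omega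
  have h1 : IIDs P (fun p : ℕ × Fin (k+d) => M (p.1 * (k+d) + p.2)) μ := by
    refine h.precomp (fun p : ℕ × Fin (k+d) => (p.1 * (k+d) + p.2)) ?_
    rintro ⟨i, r⟩ ⟨i', r'⟩ he
    simp only at he
    have e1 : i = i' := by
      have := congrArg (· / (k+d)) he
      simpa [Nat.add_div_of_dvd_right, hpos, Nat.mul_div_cancel, Nat.div_eq_of_lt r.2, Nat.div_eq_of_lt r'.2] using this
    subst e1
    simp only [Prod.mk.injEq, true_and]
    ext; omega
  have hf : Measurable (fun x : Fin (k+d) → ℝ => RR d (fun r => if hr : r < k + d then x ⟨r, hr⟩ else 0) k) := by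
    refine (measurable_RR d k).comp (measurable_pi_lambda _ fun r => ?_)
    by_cases hr : r < k + d
    · simp only [hr, dite_true]; exact measurable_pi_apply _
    · simp only [hr, dite_false]; exact measurable_const
  have h2 := h1.group _ hf
  have e : (fun (i : ℕ) ω => RR d (fun r => if hr : r < k + d then M (i * (k+d) + r) ω else 0) k)
      = fun i ω => RR d (fun r => M (i * (k+d) + r) ω) k := by
    funext i ω
    apply RR_congr
    intro r hr
    simp [show r < k + d by omega]
  simp only [dite_eq_ite] at h2 e
  rw [e] at h2
  have h3 := strong_law_ae_real (μ := P) (fun i ω => RR d (fun r => M (i * (k+d) + r) ω) k)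
    (integrable_RR (fun i => h.hm _) (fun i ω => h0 _ _) (fun i => hi _) d k)
    (fun i j hij => h2.hind.indepFun hij)
    (fun i => ⟨(h2.hm i).aemeasurable, (h2.hm 0).aemeasurable, by rw [h2.hlaw, h2.hlaw]⟩)
  have h4 : P[fun ω => RR d (fun r => M (0 * (k+d) + r) ω) k] = Phi d k μ := by
    have := h.integral_RR d k
    simpa using this
  rw [h4] at h3
  exact h3

/-- law of the block maximum -/
def blaw {Ω : Type} [MeasurableSpace Ω] (P : Measure Ω) {N : ℕ} (ξ : ℕ → Fin N → Fin 2 → Ω → ℝ) (l : ℕ) : Measure ℝ :=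
  P.map (fun ω => bmax l (mx N (jmp ξ ω)) 0)

lemma Setup.iid {Ω : Type} [MeasurableSpace Ω] {P : Measure Ω} {X : Ω → ℝ} {N : ℕ}
    {ξ : ℕ → Fin N → Fin 2 → Ω → ℝ} (h : Setup P X N ξ) :
    IIDs P (fun p : ℕ × Fin N × Fin 2 => ξ p.1 p.2.1 p.2.2) (P.map X) :=
  ⟨fun _ => h.hm _ _ _, h.hind, fun _ => h.hlaw _ _ _⟩

lemma Setup.iid_block {Ω : Type} [MeasurableSpace Ω] {P : Measure Ω} [IsProbabilityMeasure P] {X : Ω → ℝ} {N : ℕ}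
    {ξ : ℕ → Fin N → Fin 2 → Ω → ℝ} (h : Setup P X N ξ) (l : ℕ) :
    IIDs P (fun k ω => bmax l (mx N (jmp ξ ω)) k) (blaw P ξ l) := by
  have hX : IsProbabilityMeasure (P.map X) := Measure.isProbabilityMeasure_map h.hX.aemeasurable
  have h1 := h.iid.precomp (fun p : ℕ × Fin l × Fin N × Fin 2 => (p.1 * l + p.2.1, p.2.2)) (by
    rintro ⟨k, r, q⟩ ⟨k', r', q'⟩ he
    simp only [Prod.mk.injEq] at he ⊢
    obtain ⟨he, rfl⟩ := he
    have hpos : 0 < l := r.pos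
    have e1 : k = k' := by
      have := congrArg (· / l) he
      simpa [Nat.add_div_of_dvd_right, hpos, Nat.mul_div_cancel, Nat.div_eq_of_lt r.2, Nat.div_eq_of_lt r'.2] using this
    subst e1
    refine ⟨rfl, ?_, rfl⟩
    ext; omega)
  have hf : Measurable (fun x : Fin l × Fin N × Fin 2 → ℝ => ⨆ r : Fin l, ⨆ p : Fin N × Fin 2, x (r, p)) := by
    refine Measurable.iSup fun r => Measurable.iSup fun p => measurable_pi_apply _
  have h2 := h1.group _ hf
  have e := h2.hlaw 0
  rw [← e] at h2
  exact h2

lemma Setup.block_nonneg {Ω : Type} [MeasurableSpace Ω] {P : Measure Ω} {X : Ω → ℝ} {N : ℕ}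
    {ξ : ℕ → Fin N → Fin 2 → Ω → ℝ} (h : Setup P X N ξ) (l k : ℕ) (ω : Ω) :
    0 ≤ bmax l (mx N (jmp ξ ω)) k :=
  Real.iSup_nonneg fun _ => Real.iSup_nonneg fun _ => h.h0 _ _ _ _

lemma Setup.block_le_iff {Ω : Type} [MeasurableSpace Ω] {P : Measure Ω} {X : Ω → ℝ} {N : ℕ}
    {ξ : ℕ → Fin N → Fin 2 → Ω → ℝ} (_h : Setup P X N ξ) (hN : 0 < N) (l : ℕ) (hl : 0 < l) (k : ℕ) (ω : Ω) (x : ℝ) :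
    bmax l (mx N (jmp ξ ω)) k ≤ x ↔ ∀ r : Fin l, ∀ p : Fin N × Fin 2, ξ (k * l + r) p.1 p.2 ω ≤ x := by
  have : Nonempty (Fin l) := ⟨⟨0, hl⟩⟩
  have : Nonempty (Fin N) := ⟨⟨0, hN⟩⟩
  unfold bmax mx
  rw [ciSup_le_iff (Set.finite_range _).bddAbove]
  refine forall_congr' fun r => ?_
  rw [ciSup_le_iff (Set.finite_range _).bddAbove]
  rfl

lemma Setup.block_integrable {Ω : Type} [MeasurableSpace Ω] {P : Measure Ω} [IsProbabilityMeasure P] {X : Ω → ℝ} {N : ℕ}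
    {ξ : ℕ → Fin N → Fin 2 → Ω → ℝ} (h : Setup P X N ξ) (hi : Integrable X P) (hN : 0 < N) (l : ℕ) (hl : 0 < l) (k : ℕ) :
    Integrable (fun ω => bmax l (mx N (jmp ξ ω)) k) P := by
  have hξ : ∀ n i j, Integrable (ξ n i j) P := by
    intro n i j
    have : IdentDistrib (ξ n i j) X P P := ⟨(h.hm n i j).aemeasurable, h.hX.aemeasurable, h.hlaw n i j⟩
    exact this.integrable_iff.2 hi
  refine Integrable.mono' (g := fun ω => ∑ q : Fin l × Fin N × Fin 2, ξ (k * l + q.1) q.2.1 q.2.2 ω)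
    (integrable_finsetSum _ fun i _ => hξ _ _ _) ((h.iid_block l).hm k).aestronglyMeasurable ?_
  refine Eventually.of_forall fun ω => ?_
  rw [Real.norm_of_nonneg (h.block_nonneg l k ω), h.block_le_iff hN l hl]
  intro r p
  exact Finset.single_le_sum (f := fun q : Fin l × Fin N × Fin 2 => ξ (k * l + q.1) q.2.1 q.2.2 ω)
    (fun q _ => h.h0 _ _ _ _) (Finset.mem_univ (r, p))

lemma Setup.blaw_Iic {Ω : Type} [MeasurableSpace Ω] {P : Measure Ω} [IsProbabilityMeasure P] {X : Ω → ℝ} {N : ℕ}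
    {ξ : ℕ → Fin N → Fin 2 → Ω → ℝ} (h : Setup P X N ξ) (hN : 0 < N) (l : ℕ) (hl : 0 < l) (x : ℝ) :
    blaw P ξ l (Iic x) = (P {ω | X ω ≤ x}) ^ (2 * N * l) := by
  rw [blaw, Measure.map_apply ((h.iid_block l).hm 0) measurableSet_Iic]
  have h1 := h.iid.precomp (fun p : Fin l × Fin N × Fin 2 => ((p.1 : ℕ), p.2)) (by
    rintro ⟨r, q⟩ ⟨r', q'⟩ he
    simp only [Prod.mk.injEq] at he ⊢
    exact ⟨Fin.ext he.1, he.2⟩)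
  have e : (fun ω => bmax l (mx N (jmp ξ ω)) 0) ⁻¹' Iic x = ⋂ p : Fin l × Fin N × Fin 2, (ξ (p.1 : ℕ) p.2.1 p.2.2) ⁻¹' Iic x := by
    ext ω
    simp only [mem_preimage, mem_Iic, mem_iInter]
    rw [h.block_le_iff hN l hl]
    simp
  rw [e]
  have := h1.hind.measure_inter_preimage_eq_mul Finset.univ (sets := fun _ => Iic x) (fun _ _ => measurableSet_Iic)
  simp only [Finset.mem_univ, iInter_true] at this
  rw [this]
  have e2 : ∀ p : Fin l × Fin N × Fin 2, P (ξ (p.1 : ℕ) p.2.1 p.2.2 ⁻¹' Iic x) = P {ω | X ω ≤ x} := by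
    intro p
    rw [← Measure.map_apply (h.hm _ _ _) measurableSet_Iic, h.hlaw, Measure.map_apply h.hX measurableSet_Iic]
    rfl
  simp only [e2, Finset.prod_const]
  congr 1
  simp
  ring

lemma tendsto_sub_of {f : ℕ → ℝ} {v : ℝ} (hf : Tendsto (fun n : ℕ => f n / n) atTop (nhds v)) (q : ℕ) (hq : 0 < q) :
    Tendsto (fun j : ℕ => f (j * q) / ((j * q : ℕ) : ℝ)) atTop (nhds v) := by
  have : Tendsto (fun j : ℕ => j * q) atTop atTop := tendsto_id.atTop_mul_const' hq
  exact hf.comp this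

/-- the lower bound on the speed -/
lemma Setup.lower {Ω : Type} [MeasurableSpace Ω] {P : Measure Ω} [IsProbabilityMeasure P] {X : Ω → ℝ} {N : ℕ}
    {ξ : ℕ → Fin N → Fin 2 → Ω → ℝ} (h : Setup P X N ξ) (hi : Integrable X P) (hN : 0 < N) (l : ℕ) (hl : 0 < l)
    (d k : ℕ) (hk : 1 ≤ k) (hd : N ≤ 2 ^ (d * l)) (v : ℝ)
    (hv : ∀ᵐ ω ∂P, Tendsto (fun n : ℕ => brwMax N (jmp ξ ω) n / n) atTop (nhds v)) :
    Phi d k (blaw P ξ l) ≤ v * (l * (k + d)) := by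
  have hpr : IsProbabilityMeasure (blaw P ξ l) := Measure.isProbabilityMeasure_map ((h.iid_block l).hm 0).aemeasurable
  have h1 := (h.iid_block l).slln (fun i ω => h.block_nonneg l i ω) (fun i => h.block_integrable hi hN l hl i) d k hk
  obtain ⟨ω, hω1, hω2⟩ := (h1.and hv).exists
  have h3 := tendsto_sub_of hω2 ((k+d) * l) (by positivity)
  have h4 : Tendsto (fun j : ℕ => brwMax N (jmp ξ ω) (j * ((k+d)*l)) / ((j * ((k+d)*l) : ℕ) : ℝ) * (l * (k+d))) atTop
    (nhds (v * (l * (k+d)))) := h3.mul_const _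
  refine le_of_tendsto_of_tendsto hω1 h4 ?_
  filter_upwards [eventually_gt_atTop 0] with j hj
  have e : brwMax N (jmp ξ ω) (j * ((k+d)*l)) / ((j * ((k+d)*l) : ℕ) : ℝ) * (l * (k+d)) =
      brwMax N (jmp ξ ω) (j * ((k+d)*l)) / j := by
    push_cast
    field_simp
  rw [e]
  gcongr
  calc _ ≤ RR d (bmax l (mx N (jmp ξ ω))) (j * (k+d)) := RR_super_sum d k _ j
    _ ≤ RR (d * l) (mx N (jmp ξ ω)) (j * (k+d) * l) := coarse_ge _ d l hl le_rfl _ _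
    _ ≤ brwMax N (jmp ξ ω) (j * (k+d) * l) := RR_le_brwMax N hN _ (fun _ _ _ => h.h0 _ _ _ _) _ hd _
    _ = _ := by rw [mul_assoc]

lemma tS_le_log (s c K : ℝ) (hc : 0 < c) (hK : 0 < K) : s ≤ Real.log K / c + 1 / (c * K) * Real.exp (c * s) := by
  have h1 := Real.add_one_le_exp (c * s - Real.log K)
  rw [Real.exp_sub, Real.exp_log hK] at h1
  have h2 : c * s ≤ Real.log K + Real.exp (c * s) / K := by linarith
  have h3 : s ≤ (Real.log K + Real.exp (c * s) / K) / c := by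
    rw [le_div_iff₀ hc]; linarith
  calc s ≤ _ := h3
    _ = _ := by field_simp

lemma exp_trunc_le (x a c : ℝ) (hx : 0 ≤ x) (hc : 0 < c) (ha : 0 ≤ a) :
    Real.exp (c * (if x ≤ a then x else 0)) ≤ 1 + c * Real.exp (c * a) * x := by
  split_ifs with h
  · have h1 := Real.add_one_le_exp (-(c * x))
    rw [Real.exp_neg] at h1
    have h2 : Real.exp (c * x) * (-(c*x) + 1) ≤ 1 := by
      calc _ ≤ Real.exp (c * x) * (Real.exp (c*x))⁻¹ := by gcongr
        _ = 1 := by field_simp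
    have h3 : Real.exp (c * x) ≤ Real.exp (c * a) := by gcongr
    have h4 : c * x * Real.exp (c * x) ≤ c * x * Real.exp (c * a) := by gcongr
    nlinarith
  · simp; positivity

lemma measurable_tY (N D : ℕ) (a : ℝ) (n : ℕ) : Measurable (fun J : ℕ → Fin N → Fin 2 → ℝ => tY N D a J n) := by
  unfold tY
  refine Finset.measurable_sum _ fun p _ => ?_
  have h1 : Measurable (fun J : ℕ → Fin N → Fin 2 → ℝ => J n p.1 p.2) :=
    (measurable_pi_apply p.2).comp ((measurable_pi_apply p.1).comp (measurable_pi_apply n))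
  have h2 : Measurable (fun J : ℕ → Fin N → Fin 2 → ℝ => tAge N D a J n p.1) :=
    (measurable_pi_apply p.1).comp (measurable_tAge N D a n)
  refine Measurable.ite ?_ h1 measurable_const
  exact (measurableSet_lt measurable_const h1).inter (measurableSet_lt h2 measurable_const)

lemma tY_nonneg (N D : ℕ) (a : ℝ) (J : ℕ → Fin N → Fin 2 → ℝ) (hj : ∀ n i j, 0 ≤ J n i j) (n : ℕ) : 0 ≤ tY N D a J n := by
  unfold tY
  refine Finset.sum_nonneg fun p _ => ?_
  split_ifs
  exacts [hj _ _ _, le_rfl]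

lemma Setup.brwMax_bound {Ω : Type} [MeasurableSpace Ω] {P : Measure Ω} [IsProbabilityMeasure P] {X : Ω → ℝ} {N : ℕ}
    {ξ : ℕ → Fin N → Fin 2 → Ω → ℝ} (h : Setup P X N ξ) (hi : Integrable X P) (hN : 0 < N) (l : ℕ) (hl : 0 < l)
    (d k : ℕ) (hd : 1 ≤ d) (a c : ℝ) (ha : 0 < a) (hc : 0 < c) (j : ℕ) :
    ∫⁻ ω, ENNReal.ofReal (brwMax N (jmp ξ ω) (j * (k * l))) ∂P ≤
      ENNReal.ofReal (Real.log N / c + (j * (k * l) : ℕ) * (Real.log 2 / c + Real.exp (c * a) * ∫ ω, X ω ∂P) + 1 / c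
        + j * Phi (d-1) k (blaw P ξ l) + (j * (k * l) : ℕ) *
          (4 * N * tail P X a * 2 ^ (d * l) * ∫ ω, (if a < X ω then X ω else 0) ∂P)) := by
  have hNe : Nonempty (Fin N) := ⟨⟨0, hN⟩⟩
  set n := j * (k * l) with hn
  set G : ℝ := 1 + c * Real.exp (c * a) * ∫ ω, X ω ∂P with hG
  have hEX : 0 ≤ ∫ ω, X ω ∂P := integral_nonneg h.hX0
  have hG1 : 1 ≤ G := by rw [hG]; have : 0 ≤ c * Real.exp (c * a) * ∫ ω, X ω ∂P := by positivity
                         linarith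
  set K : ℝ := N * (2 * G) ^ n with hK
  have hN1 : (1:ℝ) ≤ N := by exact_mod_cast hN
  have hK1 : 1 ≤ K := by
    rw [hK]
    have : 1 ≤ (2 * G) ^ n := one_le_pow₀ (by linarith)
    nlinarith
  -- exponential moment
  have hexp : ∫⁻ ω, ENNReal.ofReal (Real.exp (c * (if X ω ≤ a then X ω else 0))) ∂P ≤ ENNReal.ofReal G := by
    calc _ ≤ ∫⁻ ω, ENNReal.ofReal (1 + c * Real.exp (c * a) * X ω) ∂P :=
          lintegral_mono fun ω => ENNReal.ofReal_le_ofReal (exp_trunc_le _ a c (h.hX0 ω) hc ha.le)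
      _ = ENNReal.ofReal (∫ ω, (1 + c * Real.exp (c * a) * X ω) ∂P) := by
          rw [ofReal_integral_eq_lintegral_ofReal]
          · exact (integrable_const _).add (hi.const_mul _)
          · exact Eventually.of_forall fun ω => by have := h.hX0 ω; positivity
      _ = ENNReal.ofReal G := by
          rw [integral_add (integrable_const _) (hi.const_mul _), integral_const_mul]
          simp [hG]
  have hZ := h.exp_bound a c _ hexp n
  have hZ' : (N : ENNReal) * (2 * ENNReal.ofReal G) ^ n = ENNReal.ofReal K := by
    rw [hK, ENNReal.ofReal_mul (by positivity), ENNReal.ofReal_pow (by positivity), ENNReal.ofReal_mul (by positivity)]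
    simp
  rw [hZ'] at hZ
  have hbig : ∫⁻ ω, ENNReal.ofReal (if a < X ω then X ω else 0) ∂P = ENNReal.ofReal (∫ ω, (if a < X ω then X ω else 0) ∂P) := by
    rw [ofReal_integral_eq_lintegral_ofReal]
    · have : (fun ω => if a < X ω then X ω else 0) = indicator {ω | a < X ω} X := by
        funext ω; simp [indicator]
      rw [this]
      exact hi.indicator (measurableSet_lt measurable_const h.hX)
    · exact Eventually.of_forall fun ω => by
        have := h.hX0 ω
        simp only [Pi.zero_apply]
        split_ifs <;> simp [this]
  have hEb : 0 ≤ ∫ ω, (if a < X ω then X ω else 0) ∂P := integral_nonneg fun ω => by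
        have := h.hX0 ω
        simp only [Pi.zero_apply]
        split_ifs <;> simp [this]
  have htail : P {ω | a < X ω} = ENNReal.ofReal (tail P X a) := by
    rw [tail, ENNReal.ofReal_toReal (measure_ne_top _ _)]
  have htn : 0 ≤ tail P X a := ENNReal.toReal_nonneg
  set Q : ℝ := 4 * N * tail P X a * 2 ^ (d * l) * ∫ ω, (if a < X ω then X ω else 0) ∂P with hQ
  have hY : ∀ m, ∫⁻ ω, ENNReal.ofReal (tY N (d * l) a (jmp ξ ω) m) ∂P ≤ ENNReal.ofReal Q := by
    intro m
    refine (h.tY_bound (d * l) a m).trans (le_of_eq ?_)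
    rw [hbig, htail, hQ, ENNReal.ofReal_mul (by positivity), ENNReal.ofReal_mul (by positivity), ENNReal.ofReal_mul (by positivity),
      ENNReal.ofReal_mul (by positivity), ENNReal.ofReal_pow (by positivity)]
    simp
    ring
  -- RR part
  have hib := h.iid_block l
  have hRR : ∫⁻ ω, ENNReal.ofReal (RR (d-1) (bmax l (mx N (jmp ξ ω))) (j * k)) ∂P ≤ ENNReal.ofReal (j * Phi (d-1) k (blaw P ξ l)) := by
    have hin : ∀ i, Integrable (fun ω => RR (d-1) (fun r => bmax l (mx N (jmp ξ ω)) (i * k + r)) k) P := fun i =>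
      integrable_RR (fun r => hib.hm _) (fun r ω => h.block_nonneg l _ ω) (fun r => h.block_integrable hi hN l hl _) _ _
    have hin0 := integrable_RR (fun r => hib.hm r) (fun r ω => h.block_nonneg l r ω) (fun r => h.block_integrable hi hN l hl r) (d-1) (j * k)
    rw [← ofReal_integral_eq_lintegral_ofReal hin0 (Eventually.of_forall fun ω => RR_nonneg _ _ _)]
    apply ENNReal.ofReal_le_ofReal
    calc _ ≤ ∫ ω, ∑ i ∈ Finset.range j, RR (d-1) (fun r => bmax l (mx N (jmp ξ ω)) (i * k + r)) k ∂P :=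
          integral_mono hin0 (integrable_finsetSum _ fun i _ => hin i) (fun ω => RR_sub_sum (d-1) k _ j)
      _ = ∑ i ∈ Finset.range j, ∫ ω, RR (d-1) (fun r => bmax l (mx N (jmp ξ ω)) (i * k + r)) k ∂P :=
          integral_finsetSum _ fun i _ => hin i
      _ = ∑ i ∈ Finset.range j, Phi (d-1) k (blaw P ξ l) := by
          refine Finset.sum_congr rfl fun i _ => ?_
          exact (hib.precomp (fun r => i * k + r) (add_right_injective _)).integral_RR (d-1) k
      _ = _ := by simp
  -- pointwise
  have hpt : ∀ ω, ENNReal.ofReal (brwMax N (jmp ξ ω) n) ≤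
      ((ENNReal.ofReal (Real.log K / c) + ENNReal.ofReal (1 / (c * K)) * ∑ i, ENNReal.ofReal (Real.exp (c * tS N a (jmp ξ ω) n i)))
      + ENNReal.ofReal (RR (d-1) (bmax l (mx N (jmp ξ ω))) (j * k))) + ∑ m ∈ Finset.range n, ENNReal.ofReal (tY N (d*l) a (jmp ξ ω) m) := by
    intro ω
    obtain ⟨i, hi⟩ := exists_eq_ciSup_of_finite (f := fun i => brw N (fun _ => 0) (jmp ξ ω) n i)
    have h1 : brwMax N (jmp ξ ω) n = brw N (fun _ => 0) (jmp ξ ω) n i := hi.symm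
    have hj0 : ∀ n i j, 0 ≤ jmp ξ ω n i j := fun n i j => h.h0 _ _ _ _
    have h2 := brw_le_tags N (d*l) a (jmp ξ ω) hj0 n i
    have h3 := tB_le N (d*l) a (jmp ξ ω) n i
    have h4 := RR_mono (d*l) (mx N (jmp ξ ω)) (Nat.sub_le n (tAge N (d*l) a (jmp ξ ω) n i))
    have h5 := coarse_le (d*l) d l hl le_rfl hd (mx N (jmp ξ ω)) (j * k) n (by rw [hn, mul_assoc])
    have h6 := tS_le_log (tS N a (jmp ξ ω) n i) c K hc (by linarith)
    have hlog : 0 ≤ Real.log K / c := div_nonneg (Real.log_nonneg hK1) hc.le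
    rw [h1]
    calc ENNReal.ofReal (brw N (fun _ => 0) (jmp ξ ω) n i) ≤
        ENNReal.ofReal (((Real.log K / c + 1 / (c * K) * Real.exp (c * tS N a (jmp ξ ω) n i)) +
          RR (d-1) (bmax l (mx N (jmp ξ ω))) (j * k)) + ∑ m ∈ Finset.range n, tY N (d*l) a (jmp ξ ω) m) := by
          apply ENNReal.ofReal_le_ofReal; linarith
      _ = ((ENNReal.ofReal (Real.log K / c) + ENNReal.ofReal (1 / (c * K)) * ENNReal.ofReal (Real.exp (c * tS N a (jmp ξ ω) n i)))
      + ENNReal.ofReal (RR (d-1) (bmax l (mx N (jmp ξ ω))) (j * k))) + ∑ m ∈ Finset.range n, ENNReal.ofReal (tY N (d*l) a (jmp ξ ω) m) := by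
          have hK0 : 0 < K := by linarith
          have hr := RR_nonneg (d-1) (bmax l (mx N (jmp ξ ω))) (j * k)
          rw [ENNReal.ofReal_add (by positivity) (Finset.sum_nonneg fun m _ => tY_nonneg _ _ _ _ hj0 m),
            ENNReal.ofReal_add (by positivity) hr, ENNReal.ofReal_add hlog (by positivity),
            ENNReal.ofReal_mul (by positivity), ENNReal.ofReal_sum_of_nonneg (fun m _ => tY_nonneg _ _ _ _ hj0 m)]
      _ ≤ _ := by
          gcongr
          exact Finset.single_le_sum (f := fun i => ENNReal.ofReal (Real.exp (c * tS N a (jmp ξ ω) n i)))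
            (fun _ _ => zero_le) (Finset.mem_univ i)
  have hmY : ∀ m, Measurable (fun ω => ENNReal.ofReal (tY N (d*l) a (jmp ξ ω) m)) := fun m =>
    ENNReal.measurable_ofReal.comp ((measurable_tY N (d*l) a m).comp h.measurable_jmp)
  have hmR : Measurable (fun ω => ENNReal.ofReal (RR (d-1) (bmax l (mx N (jmp ξ ω))) (j * k))) :=
    ENNReal.measurable_ofReal.comp ((measurable_RR (d-1) (j*k)).comp (measurable_pi_lambda _ hib.hm))
  refine (lintegral_mono hpt).trans ?_
  rw [lintegral_add_right _ (Finset.measurable_sum _ fun m _ => hmY m), lintegral_add_right _ hmR,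
    lintegral_add_left measurable_const, lintegral_const_mul' _ _ ENNReal.ofReal_ne_top,
    lintegral_finsetSum _ (fun m _ => hmY m)]
  simp only [lintegral_const, measure_univ, mul_one]
  have hPhi : 0 ≤ Phi (d-1) k (blaw P ξ l) := integral_nonneg fun x => RR_nonneg _ _ _
  have hQ0 : 0 ≤ Q := by rw [hQ]; positivity
  have hK0 : 0 < K := by linarith
  calc _ ≤ ENNReal.ofReal (Real.log K / c) + ENNReal.ofReal (1 / (c * K)) * ENNReal.ofReal K
        + ENNReal.ofReal (j * Phi (d-1) k (blaw P ξ l)) + ∑ m ∈ Finset.range n, ENNReal.ofReal Q := by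
        gcongr with m
        exact hY m
    _ = ENNReal.ofReal (Real.log K / c + 1 / (c * K) * K + j * Phi (d-1) k (blaw P ξ l) + n * Q) := by
        have hlog : 0 ≤ Real.log K / c := div_nonneg (Real.log_nonneg hK1) hc.le
        rw [ENNReal.ofReal_add (by positivity) (by positivity), ENNReal.ofReal_add (by positivity) (by positivity),
          ENNReal.ofReal_add (by positivity) (by positivity), ENNReal.ofReal_mul (p := 1 / (c*K)) (by positivity),
          ENNReal.ofReal_mul (p := (n:ℝ)) (by positivity)]
        simp
    _ ≤ _ := by
        apply ENNReal.ofReal_le_ofReal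
        have e1 : 1 / (c * K) * K = 1 / c := by field_simp
        have e2 : Real.log K = Real.log N + n * (Real.log 2 + Real.log G) := by
          rw [hK, Real.log_mul (by positivity) (by positivity), Real.log_pow, Real.log_mul (by norm_num) (by positivity)]
        have e3 : Real.log G ≤ c * (Real.exp (c * a) * ∫ ω, X ω ∂P) := by
          have := Real.log_le_sub_one_of_pos (show 0 < G by linarith)
          rw [hG] at this ⊢
          linarith
        have e4 : Real.log K / c ≤ Real.log N / c + n * (Real.log 2 / c + Real.exp (c * a) * ∫ ω, X ω ∂P) := by
          rw [div_le_iff₀ hc, e2]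
          have : (Real.log N / c + n * (Real.log 2 / c + Real.exp (c * a) * ∫ ω, X ω ∂P)) * c =
            Real.log N + n * (Real.log 2 + c * (Real.exp (c * a) * ∫ ω, X ω ∂P)) := by field_simp
          rw [this]
          gcongr
        rw [e1]
        linarith

/-- the upper bound on the speed -/
lemma Setup.upper {Ω : Type} [MeasurableSpace Ω] {P : Measure Ω} [IsProbabilityMeasure P] {X : Ω → ℝ} {N : ℕ}
    {ξ : ℕ → Fin N → Fin 2 → Ω → ℝ} (h : Setup P X N ξ) (hi : Integrable X P) (hN : 0 < N) (l : ℕ) (hl : 0 < l)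
    (d k : ℕ) (hk : 1 ≤ k) (hd : 1 ≤ d) (a c : ℝ) (ha : 0 < a) (hc : 0 < c) (v : ℝ)
    (hv : ∀ᵐ ω ∂P, Tendsto (fun n : ℕ => brwMax N (jmp ξ ω) n / n) atTop (nhds v)) :
    v ≤ Phi (d-1) k (blaw P ξ l) / (k * l) + (Real.log 2 / c + Real.exp (c * a) * ∫ ω, X ω ∂P)
        + 4 * N * tail P X a * 2 ^ (d * l) * ∫ ω, (if a < X ω then X ω else 0) ∂P := by
  have hq : 0 < k * l := by positivity
  set A := Real.log 2 / c + Real.exp (c * a) * ∫ ω, X ω ∂P with hA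
  set Q : ℝ := 4 * N * tail P X a * 2 ^ (d * l) * ∫ ω, (if a < X ω then X ω else 0) ∂P with hQ
  set B := Phi (d-1) k (blaw P ξ l) / (k * l) + A + Q with hB
  have hm : ∀ n, Measurable (fun ω => brwMax N (jmp ξ ω) n) := fun n =>
    Measurable.iSup fun i => (measurable_pi_apply i).comp ((brw_measurable N n).1.comp h.measurable_jmp)
  have hEX : 0 ≤ ∫ ω, X ω ∂P := integral_nonneg h.hX0
  have hPhi : 0 ≤ Phi (d-1) k (blaw P ξ l) := integral_nonneg fun x => RR_nonneg _ _ _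
  have hEb : 0 ≤ ∫ ω, (if a < X ω then X ω else 0) ∂P := integral_nonneg fun ω => by
        have := h.hX0 ω
        simp only [Pi.zero_apply]
        split_ifs <;> simp [this]
  have htn : 0 ≤ tail P X a := ENNReal.toReal_nonneg
  have hlog2 : 0 < Real.log 2 := Real.log_pos (by norm_num)
  have hB0 : 0 ≤ B := by rw [hB, hA, hQ]; positivity
  have h1 : ENNReal.ofReal v ≤ ENNReal.ofReal B := by
    have e1 : ENNReal.ofReal v = ∫⁻ ω, liminf (fun j : ℕ => ENNReal.ofReal (brwMax N (jmp ξ ω) (j * (k*l)) / ((j * (k*l) : ℕ) : ℝ))) atTop ∂P := by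
      rw [show ENNReal.ofReal v = ∫⁻ ω, ENNReal.ofReal v ∂P by simp]
      apply lintegral_congr_ae
      filter_upwards [hv] with ω hω
      exact ((ENNReal.continuous_ofReal.tendsto v).comp (tendsto_sub_of hω (k*l) hq)).liminf_eq.symm
    rw [e1]
    refine (lintegral_liminf_le fun j => ENNReal.measurable_ofReal.comp ((hm _).div_const _)).trans ?_
    have e2 : Tendsto (fun j : ℕ => ENNReal.ofReal ((Real.log N / c + 1 / c) / ((j * (k*l) : ℕ) : ℝ) + B)) atTop (nhds (ENNReal.ofReal B)) := by
      apply (ENNReal.continuous_ofReal.tendsto B).comp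
      have : Tendsto (fun n : ℕ => (Real.log N / c + 1 / c) / (n : ℝ)) atTop (nhds 0) := tendsto_const_div_atTop_nhds_zero_nat _
      have h2 := (this.comp (tendsto_id.atTop_mul_const' hq)).add_const B
      simpa using h2
    rw [← e2.liminf_eq]
    refine liminf_le_liminf ?_
    filter_upwards [eventually_gt_atTop 0] with j hj
    have hn0 : (0:ℝ) < ((j * (k*l) : ℕ) : ℝ) := by exact_mod_cast (by positivity)
    have e3 : ∀ ω, ENNReal.ofReal (brwMax N (jmp ξ ω) (j * (k*l)) / ((j * (k*l) : ℕ) : ℝ)) =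
        ENNReal.ofReal (brwMax N (jmp ξ ω) (j * (k*l))) * ENNReal.ofReal (1 / ((j * (k*l) : ℕ) : ℝ)) := by
      intro ω
      rw [← ENNReal.ofReal_mul' (by positivity)]; congr 1; ring
    change ∫⁻ ω, ENNReal.ofReal (brwMax N (jmp ξ ω) (j * (k*l)) / ((j * (k*l) : ℕ) : ℝ)) ∂P ≤ _
    rw [lintegral_congr e3]
    rw [lintegral_mul_const' _ _ ENNReal.ofReal_ne_top]
    calc _ ≤ _ := mul_le_mul_left (h.brwMax_bound hi hN l hl d k hd a c ha hc j) _
      _ = _ := by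
        rw [← ENNReal.ofReal_mul' (by positivity)]
        congr 1
        rw [hB, ← hA, ← hQ]
        push_cast at hn0 ⊢
        field_simp
        ring
  exact (ENNReal.ofReal_le_ofReal_iff hB0).1 h1

/-- regular variation hypotheses -/
structure RV {Ω : Type} [MeasurableSpace Ω] (P : Measure Ω) (X : Ω → ℝ) (α : ℝ) : Prop where
  hα : 1 < α
  hX : Measurable X
  hX0 : ∀ ω, 0 ≤ X ω
  hi : Integrable X P
  hrv : ∀ l : ℝ, 0 < l → Tendsto (fun x => tail P X x / tail P X (l * x)) atTop (nhds (l ^ α))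

lemma tail_nonneg {Ω : Type} [MeasurableSpace Ω] (P : Measure Ω) (X : Ω → ℝ) (x : ℝ) : 0 ≤ tail P X x :=
  ENNReal.toReal_nonneg

lemma tail_anti {Ω : Type} [MeasurableSpace Ω] (P : Measure Ω) [IsProbabilityMeasure P] (X : Ω → ℝ) :
    Antitone (tail P X) := by
  intro x y hxy
  exact ENNReal.toReal_mono (measure_ne_top _ _) (measure_mono fun ω (hω : y < X ω) => lt_of_le_of_lt hxy hω)

lemma ofReal_tail {Ω : Type} [MeasurableSpace Ω] (P : Measure Ω) [IsProbabilityMeasure P] (X : Ω → ℝ) (x : ℝ) :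
    ENNReal.ofReal (tail P X x) = P {ω | x < X ω} := by
  rw [tail, ENNReal.ofReal_toReal (measure_ne_top _ _)]

lemma tail_right {Ω : Type} [MeasurableSpace Ω] (P : Measure Ω) [IsProbabilityMeasure P] (X : Ω → ℝ)
    (x b : ℝ) (hb : 0 ≤ b) (h : ∀ y, x < y → tail P X y ≤ b) : tail P X x ≤ b := by
  have e : {ω | x < X ω} = ⋃ n : ℕ, {ω | x + 1 / ((n:ℝ) + 1) < X ω} := by
    ext ω
    simp only [mem_iUnion, mem_ofPred_eq]
    constructor
    · intro hω
      obtain ⟨n, hn⟩ := exists_nat_one_div_lt (sub_pos.2 hω)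
      exact ⟨n, by linarith⟩
    · rintro ⟨n, hn⟩
      have : 0 < 1 / ((n:ℝ) + 1) := by positivity
      linarith
  have hmono : Monotone (fun n : ℕ => {ω | x + 1 / ((n:ℝ) + 1) < X ω}) := by
    intro n m hnm ω hω
    simp only [mem_ofPred_eq] at hω ⊢
    have : 1 / ((m:ℝ) + 1) ≤ 1 / ((n:ℝ) + 1) := by
      apply one_div_le_one_div_of_le (by positivity)
      have : (n:ℝ) ≤ m := by exact_mod_cast hnm
      linarith
    linarith
  rw [← ENNReal.ofReal_le_ofReal_iff hb, ofReal_tail, e, hmono.measure_iUnion]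
  refine iSup_le fun n => ?_
  rw [← ofReal_tail]
  exact ENNReal.ofReal_le_ofReal (h _ (by have : 0 < 1 / ((n:ℝ) + 1) := by positivity
                                          linarith))

lemma tail_tendsto {Ω : Type} [MeasurableSpace Ω] (P : Measure Ω) [IsProbabilityMeasure P] (X : Ω → ℝ) (hX : Measurable X)
    (b : ℝ) (hb : 0 < b) : ∃ x, 0 ≤ x ∧ tail P X x ≤ b := by
  have h1 : Tendsto (fun n : ℕ => P {ω | (n:ℝ) < X ω}) atTop (nhds (P (⋂ n : ℕ, {ω | (n:ℝ) < X ω}))) := by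
    apply tendsto_measure_iInter_atTop
    · intro n; exact (measurableSet_lt measurable_const hX).nullMeasurableSet
    · intro n m hnm ω hω
      have : (n:ℝ) ≤ m := by exact_mod_cast hnm
      simp only [mem_ofPred_eq] at hω ⊢
      linarith
    · exact ⟨0, measure_ne_top _ _⟩
  have h2 : (⋂ n : ℕ, {ω | (n:ℝ) < X ω}) = ∅ := by
    ext ω
    simp only [mem_iInter, mem_ofPred_eq, mem_empty_iff_false, iff_false, not_forall, not_lt]
    exact exists_nat_ge (X ω)
  rw [h2, measure_empty] at h1
  have h3 := (h1.eventually (gt_mem_nhds (show (0:ENNReal) < ENNReal.ofReal b by simpa using hb))).exists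
  obtain ⟨n, hn⟩ := h3
  refine ⟨n, by positivity, ?_⟩
  rw [← ofReal_tail] at hn
  exact (ENNReal.ofReal_le_ofReal_iff hb.le).1 hn.le

lemma hinv_le_iff {Ω : Type} [MeasurableSpace Ω] (P : Measure Ω) [IsProbabilityMeasure P] (X : Ω → ℝ) (hX : Measurable X)
    (s x : ℝ) (hs : 0 < s) (hx : 0 ≤ x) : hinv P X s ≤ x ↔ tail P X x ≤ s⁻¹ := by
  have hbd : BddBelow {x : ℝ | 0 ≤ x ∧ tail P X x ≤ s⁻¹} := ⟨0, fun y hy => hy.1⟩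
  obtain ⟨x0, hx0⟩ := tail_tendsto P X hX s⁻¹ (by positivity)
  constructor
  · intro h
    have h1 : tail P X (hinv P X s) ≤ s⁻¹ := by
      apply tail_right P X _ _ (by positivity)
      intro y hy
      obtain ⟨z, hz, hzy⟩ := (csInf_lt_iff hbd ⟨x0, hx0⟩).1 hy
      exact (tail_anti P X hzy.le).trans hz.2
    exact (tail_anti P X h).trans h1
  · intro h
    exact csInf_le hbd ⟨hx, h⟩

lemma hinv_nonneg {Ω : Type} [MeasurableSpace Ω] (P : Measure Ω) (X : Ω → ℝ)
    (s : ℝ) : 0 ≤ hinv P X s := Real.sInf_nonneg fun _ hx => hx.1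

lemma hinv_mono {Ω : Type} [MeasurableSpace Ω] (P : Measure Ω) [IsProbabilityMeasure P] (X : Ω → ℝ) (hX : Measurable X)
    (s t : ℝ) (hs : 0 < s) (hst : s ≤ t) : hinv P X s ≤ hinv P X t := by
  rw [hinv_le_iff P X hX s _ hs (hinv_nonneg P X t)]
  have := (hinv_le_iff P X hX t _ (by linarith) (hinv_nonneg P X t)).1 le_rfl
  refine this.trans ?_
  gcongr

namespace RV
variable {Ω : Type} [MeasurableSpace Ω] {P : Measure Ω} [IsProbabilityMeasure P] {X : Ω → ℝ} {α : ℝ}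

lemma tail_pos (h : RV P X α) (x : ℝ) : 0 < tail P X x := by
  have h1 := h.hrv 1 one_pos
  simp only [one_mul, one_rpow] at h1
  have h2 := h1.eventually (lt_mem_nhds (show (0:ℝ) < 1 by norm_num))
  obtain ⟨y, hy, hxy⟩ := (h2.and (eventually_ge_atTop x)).exists
  have h3 : 0 < tail P X y := by
    rcases (tail_nonneg P X y).lt_or_eq with h | h
    · exact h
    · rw [← h] at hy; simp at hy
  exact h3.trans_le (tail_anti P X hxy)

lemma hinv_tendsto (h : RV P X α) : Tendsto (hinv P X) atTop atTop := by
  rw [tendsto_atTop]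
  intro b
  have ht := h.tail_pos (max b 0)
  filter_upwards [eventually_gt_atTop (tail P X (max b 0))⁻¹, eventually_gt_atTop 0] with y hy hy0
  by_contra hlt
  push Not at hlt
  have := (hinv_le_iff P X h.hX y (max b 0) hy0 (le_max_right _ _)).1 (hlt.le.trans (le_max_left _ _))
  have h2 : y ≤ (tail P X (max b 0))⁻¹ := (le_inv_comm₀ ht hy0).1 this
  linarith

lemma one_lim (h : RV P X α) : Tendsto (fun y => y * tail P X (hinv P X y)) atTop (nhds 1) := by
  have hup : ∀ᶠ y in atTop, y * tail P X (hinv P X y) ≤ 1 := by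
    filter_upwards [eventually_gt_atTop 0] with y hy
    have := (hinv_le_iff P X h.hX y _ hy (hinv_nonneg P X y)).1 le_rfl
    calc _ ≤ y * y⁻¹ := by gcongr
      _ = 1 := by field_simp
  rw [tendsto_order]
  constructor
  · intro b hb
    -- choose w < 1 with w^α > b
    have hc : Tendsto (fun w : ℝ => w ^ α) (nhdsWithin 1 (Iio 1)) (nhds 1) := by
      have : ContinuousAt (fun w : ℝ => w ^ α) 1 := Real.continuousAt_rpow_const 1 α (Or.inl one_ne_zero)
      have h2 : Tendsto (fun w : ℝ => w ^ α) (nhds 1) (nhds 1) := by simpa using this.tendsto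
      exact h2.mono_left nhdsWithin_le_nhds
    obtain ⟨w, hwb, hw1, hw0⟩ := ((hc.eventually (lt_mem_nhds hb)).and
      ((eventually_mem_nhdsWithin).and (nhdsWithin_le_nhds (lt_mem_nhds (show (0:ℝ) < 1 by norm_num))))).exists
    have hw1 : w < 1 := hw1
    have h1 := (h.hrv w hw0).comp h.hinv_tendsto
    filter_upwards [h1.eventually (lt_mem_nhds hwb), eventually_gt_atTop 0, h.hinv_tendsto.eventually (eventually_gt_atTop 0)] with y hy hy0 hi0
    simp only [Function.comp] at hy
    have hlt : ¬ hinv P X y ≤ w * hinv P X y := by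
      push Not; nlinarith
    rw [hinv_le_iff P X h.hX y _ hy0 (by positivity)] at hlt
    push Not at hlt
    have ht := h.tail_pos (w * hinv P X y)
    have ht2 := h.tail_pos (hinv P X y)
    refine hy.trans_le ?_
    rw [div_le_iff₀ ht]
    have : 1 ≤ y * tail P X (w * hinv P X y) := by
      calc 1 = y * y⁻¹ := by field_simp
        _ ≤ _ := by gcongr
    nlinarith
  · intro b hb
    filter_upwards [hup] with y hy
    linarith

lemma z_lim (h : RV P X α) (z : ℝ) (hz : 0 < z) :
    Tendsto (fun y => y * tail P X (z * hinv P X y)) atTop (nhds (z ^ (-α))) := by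
  have h1 := (h.hrv z hz).comp h.hinv_tendsto
  have h2 := h.one_lim.div h1 (by positivity)
  rw [one_div, ← Real.rpow_neg hz.le] at h2
  refine h2.congr fun y => ?_
  simp only [Pi.div_apply, Function.comp]
  have := h.tail_pos (hinv P X y)
  have := h.tail_pos (z * hinv P X y)
  field_simp

lemma ratio_lim (h : RV P X α) {ι : Type*} {F : Filter ι} (y s : ι → ℝ) (hy : Tendsto y F atTop) (θ : ℝ) (hθ : 0 < θ)
    (hs : Tendsto (fun i => s i / y i) F (nhds θ)) :
    Tendsto (fun i => hinv P X (s i) / hinv P X (y i)) F (nhds (θ ^ (1/α))) := by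
  have hα := h.hα
  have hα0 : 0 < α := by linarith
  have hc := h.hinv_tendsto.comp hy
  have key : ∀ z : ℝ, 0 < z → Tendsto (fun i => s i * tail P X (z * hinv P X (y i))) F (nhds (θ * z ^ (-α))) := by
    intro z hz
    have := hs.mul ((h.z_lim z hz).comp hy)
    refine this.congr' ?_
    filter_upwards [hy.eventually (eventually_gt_atTop 0)] with i hi
    simp only [Function.comp]
    field_simp
  have hspos : ∀ᶠ i in F, 0 < s i := by
    filter_upwards [hs.eventually (lt_mem_nhds hθ), hy.eventually (eventually_gt_atTop 0)] with i h1 h2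
    rw [lt_div_iff₀ h2] at h1; linarith
  have hpw : ∀ z : ℝ, 0 < z → (z ^ α) * z ^ (-α) = 1 := fun z hz => by
    rw [← Real.rpow_add hz]; simp
  have hθα : (θ ^ (1/α)) ^ α = θ := by
    rw [← Real.rpow_mul hθ.le]; field_simp; simp
  have hθ0 : 0 < θ ^ (1/α) := by positivity
  rw [tendsto_order]
  constructor
  · intro b hb
    obtain ⟨z, hz1, hz2⟩ := exists_between (max_lt hb hθ0)
    have hz0 : 0 < z := (le_max_right _ _).trans_lt hz1
    have hzb : b < z := (le_max_left _ _).trans_lt hz1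
    have : 1 < θ * z ^ (-α) := by
      have h3 : z ^ α < θ := by rw [← hθα]; exact Real.rpow_lt_rpow hz0.le hz2 hα0
      rw [← hpw z hz0]
      have : 0 < z ^ (-α) := by positivity
      nlinarith
    filter_upwards [(key z hz0).eventually (lt_mem_nhds this), hspos, hc.eventually (eventually_gt_atTop 0)] with i h1 h2 h3
    simp only [Function.comp] at h3
    refine hzb.trans ?_
    rw [lt_div_iff₀ h3]
    by_contra hle
    push Not at hle
    rw [hinv_le_iff P X h.hX _ _ h2 (by positivity)] at hle
    have : s i * tail P X (z * hinv P X (y i)) ≤ s i * (s i)⁻¹ := by gcongr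
    rw [mul_inv_cancel₀ h2.ne'] at this
    linarith
  · intro b hb
    obtain ⟨z, hz1, hz2⟩ := exists_between hb
    have hz0 : 0 < z := hθ0.trans hz1
    have : θ * z ^ (-α) < 1 := by
      have h3 : θ < z ^ α := by rw [← hθα]; exact Real.rpow_lt_rpow hθ0.le hz1 hα0
      rw [← hpw z hz0]
      have : 0 < z ^ (-α) := by positivity
      nlinarith
    filter_upwards [(key z hz0).eventually (gt_mem_nhds this), hspos, hc.eventually (eventually_gt_atTop 0)] with i h1 h2 h3
    simp only [Function.comp] at h3
    refine lt_of_le_of_lt ?_ hz2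
    rw [div_le_iff₀ h3, hinv_le_iff P X h.hX _ _ h2 (by positivity)]
    rw [le_inv_comm₀ (h.tail_pos _) h2, ← one_div, le_div_iff₀ (h.tail_pos _)]
    linarith

lemma dyadic_upper (h : RV P X α) (β : ℝ) (hβ : β < α) : ∃ x0 : ℝ, 0 < x0 ∧ ∀ x, x0 ≤ x → ∀ j : ℕ,
    tail P X (2 ^ j * x) ≤ ((2:ℝ) ^ (-β)) ^ j * tail P X x := by
  have h1 := (h.hrv 2 two_pos).eventually (lt_mem_nhds (Real.rpow_lt_rpow_of_exponent_lt (x := 2) (by norm_num) hβ))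
  obtain ⟨x0, hx0⟩ := eventually_atTop.1 h1
  refine ⟨max x0 1, by positivity, fun x hx j => ?_⟩
  have hx1 : 1 ≤ x := (le_max_right _ _).trans hx
  induction j with
  | zero => simp
  | succ j ih =>
    have h2 : (1:ℝ) ≤ 2 ^ j := one_le_pow₀ (by norm_num)
    have h3 := hx0 (2 ^ j * x) (by
      have := (le_max_left _ _).trans hx
      nlinarith)
    rw [lt_div_iff₀ (h.tail_pos _)] at h3
    have e : (2:ℝ) * (2 ^ j * x) = 2 ^ (j+1) * x := by ring
    rw [e] at h3
    have e2 : tail P X (2 ^ (j+1) * x) ≤ 2 ^ (-β) * tail P X (2 ^ j * x) := by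
      rw [Real.rpow_neg (by norm_num)]
      rw [inv_mul_eq_div, le_div_iff₀ (by positivity)]
      linarith
    calc _ ≤ _ := e2
      _ ≤ 2 ^ (-β) * (((2:ℝ) ^ (-β)) ^ j * tail P X x) := by gcongr
      _ = _ := by ring

lemma dyadic_lower (h : RV P X α) (γ : ℝ) (hγ : α < γ) : ∃ x0 : ℝ, 0 < x0 ∧ ∀ x, x0 ≤ x → ∀ j : ℕ,
    ((2:ℝ) ^ (-γ)) ^ j * tail P X x ≤ tail P X (2 ^ j * x) := by
  have h1 := (h.hrv 2 two_pos).eventually (gt_mem_nhds (Real.rpow_lt_rpow_of_exponent_lt (x := 2) (by norm_num) hγ))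
  obtain ⟨x0, hx0⟩ := eventually_atTop.1 h1
  refine ⟨max x0 1, by positivity, fun x hx j => ?_⟩
  have hx1 : 1 ≤ x := (le_max_right _ _).trans hx
  induction j with
  | zero => simp
  | succ j ih =>
    have h2 : (1:ℝ) ≤ 2 ^ j := one_le_pow₀ (by norm_num)
    have h3 := hx0 (2 ^ j * x) (by
      have := (le_max_left _ _).trans hx
      nlinarith)
    rw [div_lt_iff₀ (h.tail_pos _)] at h3
    have e : (2:ℝ) * (2 ^ j * x) = 2 ^ (j+1) * x := by ring
    rw [e] at h3
    have e2 : 2 ^ (-γ) * tail P X (2 ^ j * x) ≤ tail P X (2 ^ (j+1) * x) := by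
      rw [Real.rpow_neg (by norm_num)]
      rw [inv_mul_eq_div, div_le_iff₀ (by positivity)]
      linarith
    calc ((2:ℝ) ^ (-γ)) ^ (j+1) * tail P X x = 2 ^ (-γ) * (((2:ℝ) ^ (-γ)) ^ j * tail P X x) := by ring
      _ ≤ 2 ^ (-γ) * tail P X (2 ^ j * x) := by gcongr
      _ ≤ _ := e2

lemma pow_rpow_aux (γ : ℝ) (j : ℕ) : ((2:ℝ) ^ (-γ)) ^ j = ((2:ℝ) ^ j) ^ (-γ) := by
  rw [← Real.rpow_natCast, ← Real.rpow_mul (by norm_num), ← Real.rpow_natCast 2 j, ← Real.rpow_mul (by norm_num), mul_comm]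

lemma potter (h : RV P X α) (β : ℝ) (hβ0 : 0 < β) (hβ : β < α) : ∃ x0 : ℝ, 0 < x0 ∧ ∀ x, x0 ≤ x → ∀ z : ℝ, 1 ≤ z →
    tail P X (z * x) ≤ (z / 2) ^ (-β) * tail P X x := by
  obtain ⟨x0, hx0, hx⟩ := h.dyadic_upper β hβ
  refine ⟨x0, hx0, fun x hxx z hz => ?_⟩
  obtain ⟨j, hj1, hj2⟩ := exists_nat_pow_near hz (show (1:ℝ) < 2 by norm_num)
  have hxp : 0 < x := hx0.trans_le hxx
  calc tail P X (z * x) ≤ tail P X (2 ^ j * x) := tail_anti P X (by gcongr)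
    _ ≤ _ := hx x hxx j
    _ ≤ _ := by
      rw [pow_rpow_aux]
      gcongr ?_ * _
      · exact tail_nonneg _ _ _
      · apply Real.rpow_le_rpow_of_nonpos (by linarith)
        · rw [pow_succ] at hj2; linarith
        · linarith

lemma potter_lower (h : RV P X α) : ∃ C : ℝ, ∃ x0 : ℝ, 0 < C ∧ 0 < x0 ∧ ∀ x, x0 ≤ x → C * x ^ (-(α+1)) ≤ tail P X x := by
  have hα := h.hα
  obtain ⟨x0, hx0, hx⟩ := h.dyadic_lower (α+1) (by linarith)
  have ht := h.tail_pos x0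
  refine ⟨(2 / x0) ^ (-(α+1)) * tail P X x0, x0, by positivity, hx0, fun x hxx => ?_⟩
  have hz : 1 ≤ x / x0 := by rw [le_div_iff₀ hx0]; linarith
  obtain ⟨j, hj1, hj2⟩ := exists_nat_pow_near hz (show (1:ℝ) < 2 by norm_num)
  have hxp : 0 < x := hx0.trans_le hxx
  have e1 : (2 / x0) ^ (-(α+1)) * tail P X x0 * x ^ (-(α+1)) = (2 * (x / x0)) ^ (-(α+1)) * tail P X x0 := by
    have : 2 * (x / x0) = (2 / x0) * x := by ring
    rw [this, Real.mul_rpow (by positivity) (by positivity)]; ring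
  rw [e1]
  have h1 := hx x0 le_rfl (j+1)
  calc _ ≤ ((2:ℝ) ^ (-(α+1))) ^ (j+1) * tail P X x0 := by
        rw [pow_rpow_aux]
        gcongr ?_ * _
        apply Real.rpow_le_rpow_of_nonpos (by positivity)
        · rw [pow_succ]; linarith
        · linarith
    _ ≤ _ := h1
    _ ≤ _ := tail_anti P X (by rw [div_lt_iff₀ hx0] at hj2; linarith)

lemma big_bound (h : RV P X α) : ∃ C : ℝ, ∃ x0 : ℝ, 0 < C ∧ 0 < x0 ∧ ∀ a, x0 ≤ a →
    ∫ ω, (if a < X ω then X ω else 0) ∂P ≤ C * (a * tail P X a) := by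
  have hα := h.hα
  obtain ⟨x0, hx0, hx⟩ := h.dyadic_upper ((1+α)/2) (by linarith)
  set r : ℝ := 2 * 2 ^ (-((1+α)/2)) with hr
  have hr0 : 0 < r := by positivity
  have hr1 : r < 1 := by
    have : r = 2 ^ (1 - (1+α)/2) := by
      rw [hr, sub_eq_add_neg, Real.rpow_add (by norm_num), Real.rpow_one]
    rw [this]
    exact Real.rpow_lt_one_of_one_lt_of_neg (by norm_num) (by linarith)
  have hsum := summable_geometric_of_lt_one hr0.le hr1
  refine ⟨2 * ∑' j, r ^ j, x0, ?_, hx0, fun a ha => ?_⟩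
  · have := hsum.tsum_pos (fun j => by positivity) 0 (by simp)
    positivity
  have ha0 : 0 < a := hx0.trans_le ha
  have ht := tail_nonneg P X a
  have hnn : ∀ ω, 0 ≤ (if a < X ω then X ω else 0) := fun ω => by
    have := h.hX0 ω
    split_ifs <;> simp [this]
  have hts : 0 ≤ ∑' j, r ^ j := tsum_nonneg fun j => by positivity
  rw [integral_eq_lintegral_of_nonneg_ae (Eventually.of_forall hnn)
    (Measurable.ite (measurableSet_lt measurable_const h.hX) h.hX measurable_const).aestronglyMeasurable]
  apply ENNReal.toReal_le_of_le_ofReal (by positivity)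
  have hpt : ∀ ω, ENNReal.ofReal (if a < X ω then X ω else 0) ≤
      ∑' j : ℕ, ENNReal.ofReal (2 ^ (j+1) * a) * indicator {ω | 2 ^ j * a < X ω} 1 ω := by
    intro ω
    split_ifs with hω
    · have hz : 1 < X ω / a := by rw [lt_div_iff₀ ha0]; linarith
      obtain ⟨j, hj1, hj2⟩ := exists_nat_pow_near hz.le (show (1:ℝ) < 2 by norm_num)
      -- need strictness
      have : ∃ i : ℕ, (2:ℝ) ^ i * a < X ω ∧ X ω ≤ 2 ^ (i+1) * a := by
        rw [le_div_iff₀ ha0] at hj1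
        rw [div_lt_iff₀ ha0] at hj2
        rcases hj1.lt_or_eq with h1 | h1
        · exact ⟨j, h1, hj2.le⟩
        · cases j with
          | zero => simp at h1; linarith
          | succ i =>
            refine ⟨i, ?_, h1.ge⟩
            rw [← h1]
            have : (0:ℝ) < 2 ^ i * a := by positivity
            rw [pow_succ]; linarith
      obtain ⟨i, hi1, hi2⟩ := this
      refine le_trans ?_ (ENNReal.le_tsum i)
      simp only [indicator, mem_ofPred_eq, hi1, if_true, Pi.one_apply, mul_one]
      exact ENNReal.ofReal_le_ofReal hi2
    · simp
  have hms : ∀ j : ℕ, MeasurableSet {ω | 2 ^ j * a < X ω} := fun j => measurableSet_lt measurable_const h.hX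
  calc _ ≤ ∫⁻ ω, ∑' j : ℕ, ENNReal.ofReal (2 ^ (j+1) * a) * indicator {ω | 2 ^ j * a < X ω} 1 ω ∂P := lintegral_mono hpt
    _ = ∑' j : ℕ, ENNReal.ofReal (2 ^ (j+1) * a) * P {ω | 2 ^ j * a < X ω} := by
        rw [lintegral_tsum (fun j => ((measurable_one.indicator (hms j)).const_mul _).aemeasurable)]
        congr 1; funext j
        rw [lintegral_const_mul' _ _ ENNReal.ofReal_ne_top, lintegral_indicator_one (hms j)]
    _ ≤ ∑' j : ℕ, ENNReal.ofReal (2 * (a * tail P X a) * r ^ j) := by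
        refine ENNReal.tsum_le_tsum fun j => ?_
        rw [← ofReal_tail, ← ENNReal.ofReal_mul (by positivity)]
        apply ENNReal.ofReal_le_ofReal
        calc _ ≤ 2 ^ (j+1) * a * (((2:ℝ) ^ (-((1+α)/2))) ^ j * tail P X a) := by gcongr; exact hx a ha j
          _ = _ := by rw [hr, mul_pow]; ring
    _ = ENNReal.ofReal (∑' j, 2 * (a * tail P X a) * r ^ j) := by
        rw [ENNReal.ofReal_tsum_of_nonneg (fun j => by positivity) (hsum.mul_left _)]
    _ = _ := by rw [tsum_mul_left]; congr 1; ring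

end RV

/-- uniform law on the unit interval -/
def UU : Measure ℝ := volume.restrict (Ioo (0:ℝ) 1)

instance isProb_UU : IsProbabilityMeasure UU := ⟨by simp [UU]⟩

/-- level of the quantile -/
def lev (n : ℕ) (u : ℝ) : ℝ := 1 - (1 - u) ^ (1 / (n:ℝ))

lemma lev_pos (n : ℕ) (hn : 0 < n) (u : ℝ) (hu : u ∈ Ioo (0:ℝ) 1) : 0 < lev n u := by
  have h1 : (1 - u) ^ (1 / (n:ℝ)) < 1 := by
    apply Real.rpow_lt_one (by linarith [hu.2]) (by linarith [hu.1])
    positivity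
  unfold lev; linarith

lemma lev_ge (n : ℕ) (hn : 0 < n) (u : ℝ) (hu : u ∈ Ioo (0:ℝ) 1) : u / n ≤ lev n u := by
  have h1 : (1 : ℝ) ≤ n := by exact_mod_cast hn
  have := rpow_one_add_le_one_add_mul_self (s := -u) (p := 1 / (n:ℝ)) (by linarith [hu.2]) (by positivity)
    (by rw [div_le_one (by positivity)]; exact h1)
  unfold lev
  have e : (1 + -u) = 1 - u := by ring
  rw [e] at this
  have e2 : 1 / (n:ℝ) * -u = - (u / n) := by ring
  rw [e2] at this
  linarith

/-- quantile function of the maximum of `n` copies -/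
def qf {Ω : Type} [MeasurableSpace Ω] (P : Measure Ω) (X : Ω → ℝ) (n : ℕ) (u : ℝ) : ℝ :=
  open Classical in if u ∈ Ioo (0:ℝ) 1 then hinv P X (lev n u)⁻¹ else 0

section
variable {Ω : Type} [MeasurableSpace Ω] (P : Measure Ω) [IsProbabilityMeasure P] (X : Ω → ℝ)

lemma tail_le_one (x : ℝ) : tail P X x ≤ 1 := by
  have : P {ω | x < X ω} ≤ 1 := prob_le_one
  exact ENNReal.toReal_le_of_le_ofReal zero_le_one (by simpa using this)

lemma qf_nonneg (n : ℕ) (u : ℝ) : 0 ≤ qf P X n u := by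
  unfold qf; split_ifs
  · exact hinv_nonneg P X _
  · exact le_rfl

lemma qf_le_iff (hX : Measurable X) (n : ℕ) (hn : 0 < n) (u : ℝ) (hu : u ∈ Ioo (0:ℝ) 1) (x : ℝ) (hx : 0 ≤ x) :
    qf P X n u ≤ x ↔ 1 - (1 - tail P X x) ^ n ≤ u := by
  have ht := tail_le_one P X x
  rw [qf, if_pos hu, hinv_le_iff P X hX _ x (inv_pos.2 (lev_pos n hn u hu)) hx, inv_inv, lev]
  have hn' : (0:ℝ) < n := by exact_mod_cast hn
  have h1 : (1 - u) ^ (1 / (n:ℝ)) ≤ 1 - tail P X x ↔ 1 - u ≤ (1 - tail P X x) ^ n := by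
    rw [one_div, Real.rpow_inv_le_iff_of_pos (by linarith [hu.2]) (by linarith) hn', Real.rpow_natCast]
  constructor
  · intro h
    have := h1.1 (by linarith)
    linarith
  · intro h
    have := h1.2 (by linarith)
    linarith

lemma measurable_qf (hX : Measurable X) (n : ℕ) (hn : 0 < n) : Measurable (qf P X n) := by
  refine measurable_of_Iic fun x => ?_
  by_cases hx : 0 ≤ x
  · have : qf P X n ⁻¹' (Iic x) = (Ioo (0:ℝ) 1)ᶜ ∪ Ici (1 - (1 - tail P X x) ^ n) := by
      ext u
      simp only [mem_preimage, mem_Iic, mem_union, mem_compl_iff, mem_Ici]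
      by_cases hu : u ∈ Ioo (0:ℝ) 1
      · rw [qf_le_iff P X hX n hn u hu x hx]; simp only [hu]; tauto
      · simp only [hu, not_false_eq_true, true_or, iff_true]
        rw [qf, if_neg hu]; exact hx
    rw [this]
    exact measurableSet_Ioo.compl.union measurableSet_Ici
  · have : qf P X n ⁻¹' (Iic x) = ∅ := by
      ext u
      simp only [mem_preimage, mem_Iic, mem_empty_iff_false, iff_false, not_le]
      exact lt_of_lt_of_le (not_le.1 hx) (qf_nonneg P X n u)
    rw [this]; exact MeasurableSet.empty

end

lemma Setup.blaw_eq {Ω : Type} [MeasurableSpace Ω] {P : Measure Ω} [IsProbabilityMeasure P] {X : Ω → ℝ} {N : ℕ}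
    {ξ : ℕ → Fin N → Fin 2 → Ω → ℝ} (h : Setup P X N ξ) (hN : 0 < N) (l : ℕ) (hl : 0 < l) :
    blaw P ξ l = UU.map (qf P X (2 * N * l)) := by
  have hn : 0 < 2 * N * l := by positivity
  have hq := measurable_qf P X h.hX _ hn
  have : IsProbabilityMeasure (UU.map (qf P X (2 * N * l))) := Measure.isProbabilityMeasure_map hq.aemeasurable
  have : IsProbabilityMeasure (blaw P ξ l) :=
    Measure.isProbabilityMeasure_map ((h.iid_block l).hm 0).aemeasurable
  refine Measure.ext_of_Iic _ _ fun x => ?_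
  rw [h.blaw_Iic hN l hl x, Measure.map_apply hq measurableSet_Iic]
  by_cases hx : 0 ≤ x
  · set n := 2 * N * l
    set t := tail P X x with ht
    have ht1 : t ≤ 1 := tail_le_one P X x
    have ht0 : 0 ≤ t := tail_nonneg P X x
    have e1 : P {ω | X ω ≤ x} = ENNReal.ofReal (1 - t) := by
      have : {ω | X ω ≤ x} = {ω | x < X ω}ᶜ := by ext ω; simp
      rw [this, prob_compl_eq_one_sub (measurableSet_lt measurable_const h.hX), ← ofReal_tail, ENNReal.ofReal_sub _ ht0]
      simp [ht]
    have hp0 : 0 ≤ (1 - t) ^ n := pow_nonneg (by linarith) _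
    have hp1 : (1 - t) ^ n ≤ 1 := pow_le_one₀ (by linarith) (by linarith)
    rw [e1, ← ENNReal.ofReal_pow (by linarith), UU, Measure.restrict_apply (hq measurableSet_Iic)]
    have e2 : qf P X n ⁻¹' (Iic x) ∩ Ioo (0:ℝ) 1 = Ici (1 - (1 - t) ^ n) ∩ Ioo (0:ℝ) 1 := by
      ext u
      simp only [mem_preimage, mem_Iic, mem_inter_iff, mem_Ici]
      refine and_congr_left fun hu => qf_le_iff P X h.hX n hn u hu x hx
    rw [e2]
    apply le_antisymm
    · calc ENNReal.ofReal ((1 - t) ^ n) = volume (Ioo (1 - (1 - t) ^ n) 1) := by simp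
        _ ≤ volume (Ici (1 - (1 - t) ^ n) ∩ Ioo (0:ℝ) 1) := measure_mono fun u hu => ⟨hu.1.le, by linarith [hu.1], hu.2⟩
    · calc volume (Ici (1 - (1 - t) ^ n) ∩ Ioo (0:ℝ) 1) ≤ volume (Icc (1 - (1 - t) ^ n) 1) := measure_mono fun u hu => ⟨hu.1, hu.2.2.le⟩
        _ = _ := by simp
  · have e1 : {ω | X ω ≤ x} = ∅ := by
      ext ω; simp; linarith [h.hX0 ω, not_le.1 hx]
    have e2 : qf P X (2 * N * l) ⁻¹' (Iic x) = ∅ := by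
      ext u
      simp only [mem_preimage, mem_Iic, mem_empty_iff_false, iff_false, not_le]
      exact lt_of_lt_of_le (not_le.1 hx) (qf_nonneg P X _ u)
    rw [e1, e2, measure_empty, measure_empty, zero_pow (Nat.pos_iff_ne_zero.1 hn)]

/-- infinite product of uniforms -/
def UI : Measure (ℕ → ℝ) := Measure.infinitePi (fun _ : ℕ => UU)

instance isProb_UI : IsProbabilityMeasure UI := by unfold UI; infer_instance

lemma Phi_map (d k : ℕ) (q : ℝ → ℝ) (hq : Measurable q) :
    Phi d k (UU.map q) = ∫ u, RR d (fun i => q (u i)) k ∂UI := by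
  have h : IIDs UI (fun i (u : ℕ → ℝ) => q (u i)) (UU.map q) := by
    refine ⟨fun i => hq.comp (measurable_pi_apply i), ?_, ?_⟩
    · exact iIndepFun_infinitePi (P := fun _ : ℕ => UU) (X := fun _ => q) (fun _ => hq)
    · intro i
      have := (measurePreserving_eval_infinitePi (fun _ : ℕ => UU) i).map_eq
      have e : (fun u : ℕ → ℝ => q (u i)) = q ∘ (Function.eval i) := rfl
      rw [e, ← Measure.map_map hq (measurable_pi_apply i), UI, this]
  exact (h.integral_RR d k).symm

/-- Frechet quantile -/
def Fr (α u : ℝ) : ℝ := (-Real.log (1 - u)) ^ (-(1 / α))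

/-- limiting functional -/
def PhiF (α : ℝ) (d k : ℕ) : ℝ := ∫ u, RR d (fun i => Fr α (u i)) k ∂UI

/-- block length -/
def lN (m N : ℕ) : ℕ := ⌊Real.logb 2 N / m⌋₊

lemma logbN_tendsto : Tendsto (fun N : ℕ => Real.logb 2 (N:ℝ)) atTop atTop :=
  (Real.tendsto_logb_atTop (by norm_num)).comp tendsto_natCast_atTop_atTop

lemma lN_ratio (m : ℕ) (hm : 0 < m) : Tendsto (fun N : ℕ => (lN m N : ℝ) / Real.logb 2 N) atTop (nhds (1 / (m:ℝ))) := by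
  have hm' : (0:ℝ) < m := by exact_mod_cast hm
  have h1 : Tendsto (fun x : ℝ => (⌊(1 / (m:ℝ)) * x⌋₊ : ℝ) / x) atTop (nhds (1 / (m:ℝ))) :=
    tendsto_nat_floor_mul_div_atTop (by positivity)
  refine (h1.comp logbN_tendsto).congr fun N => ?_
  simp only [Function.comp, lN]
  rw [show (1 / (m:ℝ)) * Real.logb 2 N = Real.logb 2 N / m by ring]

lemma lN_pos (m : ℕ) (hm : 0 < m) : ∀ᶠ N in atTop, 0 < lN m N := by
  have hm' : (0:ℝ) < m := by exact_mod_cast hm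
  filter_upwards [logbN_tendsto.eventually_ge_atTop (m:ℝ)] with N hN
  apply Nat.floor_pos.2
  rw [le_div_iff₀ hm']; simpa using hN

lemma lN_le (m : ℕ) (N : ℕ) : (lN m N : ℝ) ≤ Real.logb 2 N / m := by
  apply Nat.floor_le
  rcases Nat.eq_zero_or_pos N with rfl | h
  · simp
  · have : (1:ℝ) ≤ N := by exact_mod_cast h
    have := Real.logb_nonneg (b := 2) (by norm_num) this
    positivity

lemma lN_le' (m : ℕ) (hm : 0 < m) (N : ℕ) : (lN m N : ℝ) ≤ Real.logb 2 N := by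
  refine (lN_le m N).trans ?_
  have hm' : (1:ℝ) ≤ m := by exact_mod_cast hm
  apply div_le_self _ hm'
  rcases Nat.eq_zero_or_pos N with rfl | h
  · simp
  · have : (1:ℝ) ≤ N := by exact_mod_cast h
    exact Real.logb_nonneg (b := 2) (by norm_num) this

lemma y_tendsto : Tendsto (fun N : ℕ => 2 * (N:ℝ) * Real.logb 2 N) atTop atTop :=
  Tendsto.atTop_mul_atTop₀ (Tendsto.const_mul_atTop (by norm_num) tendsto_natCast_atTop_atTop) logbN_tendsto

lemma lev_lim (u : ℝ) (hu : u ∈ Ioo (0:ℝ) 1) :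
    Tendsto (fun n : ℕ => (n:ℝ) * lev n u) atTop (nhds (-Real.log (1 - u))) := by
  have h0 : 0 < 1 - u := by linarith [hu.2]
  have h1 : HasDerivAt (fun x : ℝ => (1 - u) ^ x) ((1 - u) ^ (0:ℝ) * Real.log (1 - u)) 0 :=
    (Real.hasStrictDerivAt_const_rpow h0 0).hasDerivAt
  have h2 := h1.tendsto_slope_zero_right
  have h3 : Tendsto (fun n : ℕ => (1:ℝ) / n) atTop (nhdsWithin 0 (Ioi 0)) := by
    refine tendsto_nhdsWithin_iff.2 ⟨tendsto_one_div_atTop_nhds_zero_nat, ?_⟩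
    filter_upwards [eventually_gt_atTop 0] with n hn
    have : (0:ℝ) < n := by exact_mod_cast hn
    simp only [mem_Ioi]; positivity
  have h4 := (h2.comp h3).neg
  simp only [rpow_zero, one_mul] at h4
  refine h4.congr fun n => ?_
  simp only [Function.comp, lev, zero_add, smul_eq_mul, one_div, inv_inv]
  ring

lemma UU_ae : ∀ᵐ u ∂UU, u ∈ Ioo (0:ℝ) 1 := ae_restrict_mem measurableSet_Ioo

lemma UI_ae : ∀ᵐ u ∂UI, ∀ i, u i ∈ Ioo (0:ℝ) 1 := by
  rw [ae_all_iff]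
  intro i
  exact (measurePreserving_eval_infinitePi (fun _ : ℕ => UU) i).quasiMeasurePreserving.ae UU_ae

lemma UI_integrable (f : ℝ → ℝ) (hf : Integrable f UU) (i : ℕ) : Integrable (fun u : ℕ → ℝ => f (u i)) UI :=
  (measurePreserving_eval_infinitePi (fun _ : ℕ => UU) i).integrable_comp_of_integrable hf

lemma UI_integral (f : ℝ → ℝ) (hf : Measurable f) (i : ℕ) : ∫ u, f (u i) ∂UI = ∫ u, f u ∂UU := by
  have h := (measurePreserving_eval_infinitePi (fun _ : ℕ => UU) i)
  rw [← h.map_eq, integral_map h.measurable.aemeasurable hf.aestronglyMeasurable]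
  rfl

lemma rpow_integrable (s : ℝ) (hs : -1 < s) : Integrable (fun u : ℝ => u ^ s) UU :=
  (intervalIntegral.integrableOn_Ioo_rpow_iff (zero_lt_one)).2 hs

lemma measurable_Fr (α : ℝ) : Measurable (Fr α) := by unfold Fr; fun_prop

lemma neg_log_ge (u : ℝ) (hu : u ∈ Ioo (0:ℝ) 1) : u ≤ -Real.log (1 - u) := by
  have := Real.log_le_sub_one_of_pos (show 0 < 1 - u by linarith [hu.2])
  linarith

lemma Fr_pos (α u : ℝ) (hu : u ∈ Ioo (0:ℝ) 1) : 0 < Fr α u :=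
  Real.rpow_pos_of_pos (lt_of_lt_of_le hu.1 (neg_log_ge u hu)) _

lemma Fr_le (α u : ℝ) (hα : 0 < α) (hu : u ∈ Ioo (0:ℝ) 1) : Fr α u ≤ u ^ (-(1/α)) := by
  unfold Fr
  apply Real.rpow_le_rpow_of_nonpos hu.1 (neg_log_ge u hu)
  have : 0 < 1 / α := by positivity
  linarith

lemma Fr_integrable (α : ℝ) (hα : 1 < α) : Integrable (Fr α) UU := by
  refine Integrable.mono' (rpow_integrable (-(1/α)) ?_) (measurable_Fr α).aestronglyMeasurable ?_
  · rw [neg_lt_neg_iff, div_lt_one (by linarith)]; exact hα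
  · filter_upwards [UU_ae] with u hu
    rw [Real.norm_of_nonneg (Fr_pos α u hu).le]
    exact Fr_le α u (by linarith) hu

section
variable {Ω : Type} [MeasurableSpace Ω] {P : Measure Ω} [IsProbabilityMeasure P] {X : Ω → ℝ} {α : ℝ}

lemma cN_tendsto (h : RV P X α) : Tendsto (fun N : ℕ => cN P X N) atTop atTop :=
  h.hinv_tendsto.comp y_tendsto

lemma qf_lim (h : RV P X α) (m : ℕ) (hm : 0 < m) (u : ℝ) (hu : u ∈ Ioo (0:ℝ) 1) :
    Tendsto (fun N : ℕ => (cN P X N)⁻¹ * qf P X (2 * N * lN m N) u) atTop (nhds ((m:ℝ) ^ (-(1/α)) * Fr α u)) := by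
  have hm' : (0:ℝ) < m := by exact_mod_cast hm
  have hL : 0 < -Real.log (1 - u) := lt_of_lt_of_le hu.1 (neg_log_ge u hu)
  have hnat : Tendsto (fun N : ℕ => 2 * N * lN m N) atTop atTop := by
    refine tendsto_atTop_mono' _ ?_ tendsto_id
    filter_upwards [lN_pos m hm] with N hN
    simp only [id]
    nlinarith
  have h1 : Tendsto (fun N : ℕ => (lev (2 * N * lN m N) u)⁻¹ / (2 * (N:ℝ) * Real.logb 2 N)) atTop
      (nhds ((1 / (m:ℝ)) / (-Real.log (1 - u)))) := by
    refine ((lN_ratio m hm).div ((lev_lim u hu).comp hnat) hL.ne').congr' ?_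
    filter_upwards [lN_pos m hm, eventually_gt_atTop 0, logbN_tendsto.eventually_gt_atTop 0] with N h1 h2 h3
    have h4 := lev_pos (2 * N * lN m N) (by positivity) u hu
    have h1' : (0:ℝ) < lN m N := by exact_mod_cast h1
    have h2' : (0:ℝ) < N := by exact_mod_cast h2
    rw [Pi.div_apply, Function.comp_apply]
    push_cast
    field_simp
  have h2 := h.ratio_lim _ _ y_tendsto ((1 / (m:ℝ)) / (-Real.log (1 - u))) (by positivity) h1
  have e : ((1 / (m:ℝ)) / (-Real.log (1 - u))) ^ (1/α) = (m:ℝ) ^ (-(1/α)) * Fr α u := by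
    unfold Fr
    rw [Real.div_rpow (by positivity) hL.le, Real.div_rpow (by positivity) hm'.le, Real.one_rpow,
      Real.rpow_neg hm'.le, Real.rpow_neg hL.le, div_eq_mul_inv, one_div]
  rw [e] at h2
  refine h2.congr fun N => ?_
  rw [qf, if_pos hu, cN, div_eq_inv_mul]

lemma qf_bound (h : RV P X α) (m : ℕ) (hm : 0 < m) : ∀ᶠ N : ℕ in atTop, ∀ u ∈ Ioo (0:ℝ) 1,
    (cN P X N)⁻¹ * qf P X (2 * N * lN m N) u ≤ 2 * u ^ (-(1/((1+α)/2))) := by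
  have hα := h.hα
  set β := (1+α)/2 with hβ
  have hβ1 : 1 < β := by rw [hβ]; linarith
  obtain ⟨x0, hx0, hpot⟩ := h.potter β (by linarith) (by rw [hβ]; linarith)
  filter_upwards [(cN_tendsto h).eventually_ge_atTop x0, lN_pos m hm, eventually_gt_atTop 0,
    logbN_tendsto.eventually_gt_atTop 0] with N h1 h2 h3 h5 u hu
  have hc : 0 < cN P X N := by linarith
  have h2' : (0:ℝ) < lN m N := by exact_mod_cast h2
  have h3' : (0:ℝ) < N := by exact_mod_cast h3
  have hn : 0 < 2 * N * lN m N := by positivity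
  have hy : 0 < 2 * (N:ℝ) * Real.logb 2 N := by positivity
  have hz : 1 ≤ u ^ (-(1/β)) := by
    apply Real.one_le_rpow_of_pos_of_le_one_of_nonpos hu.1 hu.2.le
    have : 0 < 1 / β := by positivity
    linarith
  rw [inv_mul_le_iff₀ hc, qf, if_pos hu, mul_comm (cN P X N),
    hinv_le_iff P X h.hX _ _ (inv_pos.2 (lev_pos _ hn u hu)) (by positivity), inv_inv]
  calc tail P X (2 * u ^ (-(1/β)) * cN P X N) ≤ (2 * u ^ (-(1/β)) / 2) ^ (-β) * tail P X (cN P X N) :=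
        hpot _ h1 _ (by linarith)
    _ = u * tail P X (cN P X N) := by
        rw [mul_div_cancel_left₀ _ (by norm_num), ← Real.rpow_mul hu.1.le]
        have : -(1/β) * -β = 1 := by field_simp
        rw [this, Real.rpow_one]
    _ ≤ u * (2 * (N:ℝ) * Real.logb 2 N)⁻¹ := by
        have := (hinv_le_iff P X h.hX _ (cN P X N) hy hc.le).1 le_rfl
        exact mul_le_mul_of_nonneg_left this hu.1.le
    _ ≤ u / ((2 * N * lN m N : ℕ) : ℝ) := by
        rw [div_eq_mul_inv]
        have := lN_le' m hm N
        have hu1 := hu.1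
        push_cast
        gcongr
    _ ≤ _ := lev_ge _ hn u hu

lemma Phi_lim (h : RV P X α) (ξ : (N : ℕ) → ℕ → Fin N → Fin 2 → Ω → ℝ) (hξ : ∀ N, Setup P X N (ξ N))
    (m : ℕ) (hm : 0 < m) (d k : ℕ) :
    Tendsto (fun N : ℕ => Phi d k (blaw P (ξ N) (lN m N)) / cN P X N) atTop
      (nhds ((m:ℝ) ^ (-(1/α)) * PhiF α d k)) := by
  have hα := h.hα
  have hm' : (0:ℝ) < m := by exact_mod_cast hm
  have e : (m:ℝ) ^ (-(1/α)) * PhiF α d k = ∫ u, RR d (fun i => (m:ℝ) ^ (-(1/α)) * Fr α (u i)) k ∂UI := by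
    rw [PhiF, ← integral_const_mul]
    congr 1; ext u
    rw [RR_smul _ _ _ (by positivity)]
  rw [e]
  have hD : Tendsto (fun N : ℕ => ∫ u, RR d (fun i => (cN P X N)⁻¹ * qf P X (2 * N * lN m N) (u i)) k ∂UI) atTop
      (nhds (∫ u, RR d (fun i => (m:ℝ) ^ (-(1/α)) * Fr α (u i)) k ∂UI)) := by
    refine tendsto_integral_filter_of_dominated_convergence
      (fun u => ∑ i ∈ Finset.range k, 2 * (u i) ^ (-(1/((1+α)/2)))) ?_ ?_ ?_ ?_
    · filter_upwards [lN_pos m hm, eventually_gt_atTop 0] with N h1 h2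
      have hq := measurable_qf P X h.hX (2 * N * lN m N) (by positivity)
      have : Measurable (fun u : ℕ → ℝ => fun i => (cN P X N)⁻¹ * qf P X (2 * N * lN m N) (u i)) :=
        measurable_pi_lambda _ fun i => (hq.comp (measurable_pi_apply i)).const_mul _
      exact ((measurable_RR d k).comp this).aestronglyMeasurable
    · filter_upwards [qf_bound h m hm] with N hN
      filter_upwards [UI_ae] with u hu
      rw [Real.norm_of_nonneg (RR_nonneg _ _ _)]
      refine (RR_le_sum _ _ (fun i => mul_nonneg (inv_nonneg.2 (hinv_nonneg P X _)) (qf_nonneg P X _ _)) _).trans ?_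
      exact Finset.sum_le_sum fun i _ => hN _ (hu i)
    · refine integrable_finsetSum _ fun i _ => ?_
      refine (UI_integrable _ (rpow_integrable (-(1/((1+α)/2))) ?_) i).const_mul 2
      rw [neg_lt_neg_iff, div_lt_one (by linarith)]; linarith
    · filter_upwards [UI_ae] with u hu
      have h1 : Tendsto (fun N : ℕ => fun i => (cN P X N)⁻¹ * qf P X (2 * N * lN m N) (u i)) atTop
          (nhds (fun i => (m:ℝ) ^ (-(1/α)) * Fr α (u i))) :=
        tendsto_pi_nhds.2 fun i => qf_lim h m hm _ (hu i)
      exact ((continuous_RR d k).tendsto _).comp h1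
  refine hD.congr' ?_
  filter_upwards [lN_pos m hm, eventually_gt_atTop 0] with N h1 h2
  rw [(hξ N).blaw_eq h2 _ h1, Phi_map _ _ _ (measurable_qf P X h.hX _ (by positivity)), div_eq_inv_mul, ← integral_const_mul]
  congr 1; ext u
  exact RR_smul _ _ _ (inv_nonneg.2 (hinv_nonneg P X _)) _
end

lemma RR_short (d : ℕ) (y : ℕ → ℝ) (a : ℝ) (ha : 0 ≤ a) (n : ℕ) (hn : n ≤ d) :
    RR d y n ≤ a + ∑ r ∈ Finset.range n, max (y r - a) 0 := by
  induction n with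
  | zero => simp [RR_zero, ha]
  | succ n ih =>
    rw [RR_succ, Finset.sum_range_succ, show n - d = 0 by omega, RR_zero]
    have h1 := ih (by omega)
    have h2 : 0 ≤ ∑ r ∈ Finset.range n, max (y r - a) 0 := Finset.sum_nonneg fun _ _ => le_max_right _ _
    have h3 := le_max_left (y n - a) 0
    have h4 := le_max_right (y n - a) 0
    exact max_le (by linarith) (by linarith)

lemma excess_integrable (α : ℝ) (hα : 1 < α) (a : ℝ) : Integrable (fun u => max (Fr α u - a) 0) UU :=
  ((Fr_integrable α hα).sub (integrable_const a)).pos_part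

lemma excess_bound (α : ℝ) (hα : 1 < α) (d : ℕ) (hd : 0 < d) :
    d * ∫ u, max (Fr α u - (d:ℝ) ^ (1/α)) 0 ∂UU ≤ (d:ℝ) ^ (1/α) * (1 - 1/α)⁻¹ := by
  have hd' : (1:ℝ) ≤ d := by exact_mod_cast hd
  have hd0 : (0:ℝ) < d := by linarith
  have ha1 : 0 < 1 / α := by positivity
  have ha2 : 1 / α < 1 := by rw [div_lt_one (by linarith)]; exact hα
  set s : ℝ := -(1/α) with hs
  have hI : ∫ u, max (Fr α u - (d:ℝ) ^ (1/α)) 0 ∂UU ≤ ∫ u, (Ioo (0:ℝ) (1/d)).indicator (fun u => u ^ s) u ∂UU := by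
    refine integral_mono_ae (excess_integrable α hα _) ((rpow_integrable s (by rw [hs]; linarith)).indicator measurableSet_Ioo) ?_
    filter_upwards [UU_ae] with u hu
    have h1 := Fr_le α u (by linarith) hu
    by_cases hud : u < 1 / d
    · rw [indicator_of_mem (show u ∈ Ioo (0:ℝ) (1/d) from ⟨hu.1, hud⟩)]
      have h2 : 0 ≤ (d:ℝ) ^ (1/α) := by positivity
      have h3 : 0 ≤ u ^ s := Real.rpow_nonneg hu.1.le _
      exact max_le (by linarith) h3
    · rw [indicator_of_notMem (fun h => hud h.2)]
      push Not at hud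
      have h2 : u ^ s ≤ (1 / (d:ℝ)) ^ s := Real.rpow_le_rpow_of_nonpos (by positivity) hud (by rw [hs]; linarith)
      have h3 : (1 / (d:ℝ)) ^ s = (d:ℝ) ^ (1/α) := by
        rw [one_div, Real.inv_rpow hd0.le, hs, Real.rpow_neg hd0.le, inv_inv]
      exact max_le (by linarith) le_rfl
  have hJ : ∫ u, (Ioo (0:ℝ) (1/d)).indicator (fun u => u ^ s) u ∂UU = (1 / (d:ℝ)) ^ (1 - 1/α) / (1 - 1/α) := by
    unfold UU
    rw [setIntegral_indicator measurableSet_Ioo, Ioo_inter_Ioo]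
    have h1 : (1:ℝ) ⊓ (1 / d) = 1 / d := by
      apply min_eq_right; rw [div_le_one hd0]; exact hd'
    rw [h1, sup_idem, ← integral_Ioc_eq_integral_Ioo, ← intervalIntegral.integral_of_le (by positivity),
      integral_rpow (Or.inl (by rw [hs]; linarith))]
    have e : s + 1 = 1 - 1/α := by rw [hs]; ring
    rw [e, Real.zero_rpow (by linarith), sub_zero]
  rw [hJ] at hI
  calc _ ≤ (d:ℝ) * ((1 / (d:ℝ)) ^ (1 - 1/α) / (1 - 1/α)) := mul_le_mul_of_nonneg_left hI hd0.le
    _ = _ := by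
      rw [one_div, Real.inv_rpow hd0.le, Real.rpow_sub hd0, Real.rpow_one, inv_div]
      field_simp

lemma PhiF_bound (α : ℝ) (hα : 1 < α) (d : ℕ) (hd : 0 < d) (k : ℕ) :
    PhiF α d k ≤ (1 + (1 - 1/α)⁻¹) * (d:ℝ) ^ (1/α) * ((k + d) / d) := by
  have hd0 : (0:ℝ) < d := by exact_mod_cast hd
  have ha2 : 1 / α < 1 := by rw [div_lt_one (by linarith)]; exact hα
  set a := (d:ℝ) ^ (1/α) with ha
  have ha0 : 0 ≤ a := by positivity
  set j := k / d + 1 with hj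
  have hjd : j * d ≤ k + d := by
    have := Nat.div_mul_le_self k d
    rw [hj, add_mul]; omega
  have hkj : k ≤ j * d := by
    have := Nat.lt_div_mul_add (a := k) hd
    rw [hj, add_mul]; omega
  have hp : ∀ u : ℕ → ℝ, RR d (fun i => Fr α (u i)) k ≤
      ∑ i ∈ Finset.range j, (a + ∑ r ∈ Finset.range d, max (Fr α (u (i * d + r)) - a) 0) := by
    intro u
    refine (RR_mono d _ hkj).trans ((RR_sub_sum d d _ j).trans ?_)
    exact Finset.sum_le_sum fun i _ => RR_short d _ a ha0 d le_rfl
  have hi : ∀ n, Integrable (fun u : ℕ → ℝ => max (Fr α (u n) - a) 0) UI := fun n =>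
    UI_integrable _ (excess_integrable α hα a) n
  have hi2 : ∀ i, Integrable (fun u : ℕ → ℝ => a + ∑ r ∈ Finset.range d, max (Fr α (u (i * d + r)) - a) 0) UI :=
    fun i => (integrable_const a).add (integrable_finsetSum _ fun r _ => hi _)
  have hmeas : Measurable (fun u : ℝ => max (Fr α u - a) 0) := ((measurable_Fr α).sub_const a).max measurable_const
  have h1 : PhiF α d k ≤ ∫ u, ∑ i ∈ Finset.range j, (a + ∑ r ∈ Finset.range d, max (Fr α (u (i * d + r)) - a) 0) ∂UI := by
    refine integral_mono_of_nonneg (Eventually.of_forall fun u => RR_nonneg _ _ _) (integrable_finsetSum _ fun i _ => hi2 i)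
      (Eventually.of_forall hp)
  have h2 : ∫ u, ∑ i ∈ Finset.range j, (a + ∑ r ∈ Finset.range d, max (Fr α (u (i * d + r)) - a) 0) ∂UI
      = j * (a + d * ∫ u, max (Fr α u - a) 0 ∂UU) := by
    rw [integral_finsetSum _ fun i _ => hi2 i]
    have : ∀ i, ∫ u, (a + ∑ r ∈ Finset.range d, max (Fr α (u (i * d + r)) - a) 0) ∂UI
        = a + d * ∫ u, max (Fr α u - a) 0 ∂UU := by
      intro i
      rw [integral_add (integrable_const a) (integrable_finsetSum _ fun r _ => hi _), integral_finsetSum _ fun r _ => hi _]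
      simp [UI_integral _ hmeas]
    simp [this]
    ring
  rw [h2] at h1
  have h3 := excess_bound α hα d hd
  have h4 : (j:ℝ) ≤ (k + d) / d := by
    rw [le_div_iff₀ hd0]; exact_mod_cast hjd
  have h5 : 0 < (1 - 1/α)⁻¹ := inv_pos.2 (by linarith)
  calc PhiF α d k ≤ _ := h1
    _ ≤ j * (a + a * (1 - 1/α)⁻¹) := by gcongr
    _ ≤ ((k + d) / d) * (a + a * (1 - 1/α)⁻¹) := by gcongr
    _ = _ := by ring

/-- elements defining the limit constant -/
def elt (α : ℝ) (m k : ℕ) : ℝ := ((m:ℝ) + 1) ^ (1 - 1/α) * PhiF α (m + 2) (k + 1) / ((k:ℝ) + m + 3)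

lemma elt_le (α : ℝ) (hα : 1 < α) (m k : ℕ) : elt α m k ≤ 1 + (1 - 1/α)⁻¹ := by
  have ha2 : 1 / α < 1 := by rw [div_lt_one (by linarith)]; exact hα
  have h1 := PhiF_bound α hα (m + 2) (by omega) (k + 1)
  have h5 : 0 < (1 - 1/α)⁻¹ := inv_pos.2 (by linarith)
  unfold elt
  rw [div_le_iff₀ (by positivity)]
  calc ((m:ℝ) + 1) ^ (1 - 1/α) * PhiF α (m + 2) (k + 1)
      ≤ ((m:ℝ) + 2) ^ (1 - 1/α) * PhiF α (m + 2) (k + 1) := by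
        have : 0 ≤ PhiF α (m + 2) (k + 1) := integral_nonneg fun u => RR_nonneg _ _ _
        gcongr
        norm_num
    _ ≤ ((m:ℝ) + 2) ^ (1 - 1/α) * _ := mul_le_mul_of_nonneg_left h1 (by positivity)
    _ = _ := by
        push_cast
        have hp : (0:ℝ) < m + 2 := by positivity
        rw [Real.rpow_sub hp, Real.rpow_one]
        have : ((m:ℝ) + 2) ^ (1/α) ≠ 0 := by positivity
        field_simp
        ring

/-- the limit constant -/
def rho (α : ℝ) : ℝ := ⨆ p : ℕ × ℕ, elt α p.1 p.2

lemma le_rho (α : ℝ) (hα : 1 < α) (m k : ℕ) : elt α m k ≤ rho α := by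
  refine le_ciSup (f := fun p : ℕ × ℕ => elt α p.1 p.2) ⟨1 + (1 - 1/α)⁻¹, ?_⟩ (m, k)
  rintro _ ⟨p, rfl⟩
  exact elt_le α hα _ _

lemma rho_pos (α : ℝ) (hα : 1 < α) : 0 < rho α := by
  refine lt_of_lt_of_le ?_ (le_rho α hα 0 0)
  unfold elt
  have : 0 < PhiF α 2 1 := by
    unfold PhiF
    have e : ∀ᵐ u ∂UI, RR 2 (fun i => Fr α (u i)) 1 = Fr α (u 0) := by
      filter_upwards [UI_ae] with u hu
      have := Fr_pos α _ (hu 0)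
      rw [RR_succ, RR_zero]; simp [RR_zero, this.le]
    rw [integral_congr_ae e, UI_integral _ (measurable_Fr α)]
    rw [integral_pos_iff_support_of_nonneg_ae]
    · have : UU (Function.support (Fr α))ᶜ = 0 := by
        rw [← mem_ae_iff]
        filter_upwards [UU_ae] with u hu
        exact (Fr_pos α u hu).ne'
      have h2 : (1:ENNReal) ≤ UU (Function.support (Fr α)) + UU (Function.support (Fr α))ᶜ := by
        have := measure_union_le (μ := UU) (Function.support (Fr α)) (Function.support (Fr α))ᶜ
        rw [union_compl_self, measure_univ] at this
        exact this
      rw [this, add_zero] at h2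
      exact lt_of_lt_of_le one_pos h2
    · filter_upwards [UU_ae] with u hu
      exact (Fr_pos α u hu).le
    · exact Fr_integrable α hα
  have h3 : (0:ℝ) < ((0:ℕ):ℝ) + 1 := by norm_num
  positivity

lemma two_rpow_L (N : ℕ) (hN : 0 < N) : (2:ℝ) ^ (Real.logb 2 N) = N :=
  Real.rpow_logb (by norm_num) (by norm_num) (by exact_mod_cast hN)

section
variable {Ω : Type} [MeasurableSpace Ω] {P : Measure Ω} [IsProbabilityMeasure P] {X : Ω → ℝ} {α : ℝ}

lemma first_lim (h : RV P X α) (ξ : (N : ℕ) → ℕ → Fin N → Fin 2 → Ω → ℝ) (hξ : ∀ N, Setup P X N (ξ N))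
    (m : ℕ) (hm : 0 < m) (d k : ℕ) :
    Tendsto (fun N : ℕ => Phi d k (blaw P (ξ N) (lN m N)) / cN P X N * (Real.logb 2 N / lN m N)) atTop
      (nhds ((m:ℝ) ^ (1 - 1/α) * PhiF α d k)) := by
  have hm' : (0:ℝ) < m := by exact_mod_cast hm
  have h1 := (Phi_lim h ξ hξ m hm d k).mul ((lN_ratio m hm).inv₀ (by positivity))
  have e : (m:ℝ) ^ (-(1/α)) * PhiF α d k * (1 / (m:ℝ))⁻¹ = (m:ℝ) ^ (1 - 1/α) * PhiF α d k := by
    rw [sub_eq_add_neg, Real.rpow_add hm', Real.rpow_one]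
    field_simp
  rw [e] at h1
  refine h1.congr fun N => ?_
  rw [inv_div]

lemma lower_ev (h : RV P X α) (ξ : (N : ℕ) → ℕ → Fin N → Fin 2 → Ω → ℝ) (hξ : ∀ N, Setup P X N (ξ N))
    (v : ℕ → ℝ) (hv : ∀ N : ℕ, 1 ≤ N → ∀ᵐ ω ∂P, Tendsto (fun n : ℕ => brwMax N (jmp (ξ N) ω) n / n) atTop (nhds (v N)))
    (m k : ℕ) (r : ℝ) (hr : r < elt α m k) : ∀ᶠ N : ℕ in atTop, r < v N * Real.logb 2 N / cN P X N := by
  have h1 := (first_lim h ξ hξ (m+1) (by omega) (m+2) (k+1)).div_const ((k:ℝ) + m + 3)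
  have e : ((m+1:ℕ):ℝ) ^ (1 - 1/α) * PhiF α (m+2) (k+1) / ((k:ℝ) + m + 3) = elt α m k := by
    unfold elt; push_cast; rfl
  rw [e] at h1
  have hrat : ∀ᶠ N : ℕ in atTop, 1 / ((m:ℝ) + 2) < (lN (m+1) N : ℝ) / Real.logb 2 N := by
    refine (lN_ratio (m+1) (by omega)).eventually_const_lt ?_
    push_cast
    exact one_div_lt_one_div_of_lt (by positivity) (by linarith)
  filter_upwards [h1.eventually_const_lt hr, lN_pos (m+1) (by omega), eventually_gt_atTop 0, hrat,
    logbN_tendsto.eventually_gt_atTop 0, (cN_tendsto h).eventually_gt_atTop 0] with N h2 h3 h4 h5 h6 h7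
  refine lt_of_lt_of_le h2 ?_
  have hl : (0:ℝ) < lN (m+1) N := by exact_mod_cast h3
  have hd : N ≤ 2 ^ ((m+2) * lN (m+1) N) := by
    have h8 : Real.logb 2 N ≤ (((m+2) * lN (m+1) N : ℕ) : ℝ) := by
      push_cast
      rw [div_lt_div_iff₀ (by positivity) h6] at h5
      linarith
    have h9 := Real.rpow_le_rpow_of_exponent_le (show (1:ℝ) ≤ 2 by norm_num) h8
    rw [two_rpow_L N h4, Real.rpow_natCast] at h9
    exact_mod_cast h9
  have h10 := (hξ N).lower h.hi h4 (lN (m+1) N) h3 (m+2) (k+1) (by omega) hd (v N) (hv N h4)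
  push_cast at h10
  rw [div_le_div_iff₀ (by positivity) h7]
  have e2 : Phi (m+2) (k+1) (blaw P (ξ N) (lN (m+1) N)) / cN P X N * (Real.logb 2 N / lN (m+1) N) * cN P X N
     = Phi (m+2) (k+1) (blaw P (ξ N) (lN (m+1) N)) * (Real.logb 2 N / lN (m+1) N) := by field_simp
  rw [e2]
  calc _ ≤ v N * (lN (m+1) N * (k + 1 + (m + 2))) * (Real.logb 2 N / lN (m+1) N) := by gcongr
    _ = _ := by field_simp; ring

lemma cN_tail (h : RV P X α) : ∀ᶠ N : ℕ in atTop, tail P X (cN P X N) ≤ (2 * (N:ℝ) * Real.logb 2 N)⁻¹ := by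
  filter_upwards [y_tendsto.eventually_gt_atTop 0] with N hN
  exact (hinv_le_iff P X h.hX _ _ hN (hinv_nonneg P X _)).1 le_rfl

lemma cN_lower (h : RV P X α) : ∃ C : ℝ, 0 < C ∧ ∀ᶠ N : ℕ in atTop, C * (N:ℝ) ^ (1/(α+1)) ≤ cN P X N := by
  have hα := h.hα
  obtain ⟨C, x0, hC, hx0, hb⟩ := h.potter_lower
  refine ⟨C ^ (1/(α+1)), by positivity, ?_⟩
  filter_upwards [cN_tail h, (cN_tendsto h).eventually_ge_atTop x0, eventually_gt_atTop 0,
    logbN_tendsto.eventually_ge_atTop 1] with N h1 h2 h3 h4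
  have hc : 0 < cN P X N := by linarith
  have hN : (0:ℝ) < N := by exact_mod_cast h3
  have h5 := (hb _ h2).trans h1
  have h6 : (2 * (N:ℝ) * Real.logb 2 N)⁻¹ ≤ (N:ℝ)⁻¹ := by
    apply inv_anti₀ hN; nlinarith
  have h7 : C * N ≤ cN P X N ^ (α+1) := by
    have h8 := h5.trans h6
    have hp : 0 < cN P X N ^ (α+1) := by positivity
    rw [Real.rpow_neg hc.le, ← div_eq_mul_inv, div_le_iff₀ hp, inv_mul_eq_div, le_div_iff₀ hN] at h8
    exact h8
  rw [← Real.mul_rpow hC.le hN.le]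
  calc (C * N) ^ (1/(α+1)) ≤ (cN P X N ^ (α+1)) ^ (1/(α+1)) := by gcongr
    _ = cN P X N := by
      rw [← Real.rpow_mul hc.le, mul_one_div_cancel (by linarith), Real.rpow_one]

lemma second_lim (h : RV P X α) (A ε : ℝ) (hA : 0 < A) (hε : ε = Real.log 2 / (2 * A * (α+1))) :
    Tendsto (fun N : ℕ => Real.exp (A * ε * Real.logb 2 N) * Real.logb 2 N / cN P X N) atTop (nhds 0) := by
  have hα := h.hα
  obtain ⟨C, hC, hc⟩ := cN_lower h
  set γ := 1/(α+1) with hγ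
  have hγ0 : 0 < γ := by positivity
  have hlog2 : 0 < Real.log 2 := Real.log_pos (by norm_num)
  have h1 : Tendsto (fun x : ℝ => Real.log x / x ^ (γ/2)) atTop (nhds 0) :=
    (isLittleO_log_rpow_atTop (by positivity)).tendsto_div_nhds_zero
  have h2 : Tendsto (fun N : ℕ => (C * Real.log 2)⁻¹ * (Real.log (N:ℝ) / (N:ℝ) ^ (γ/2))) atTop (nhds 0) := by
    have := (h1.comp tendsto_natCast_atTop_atTop).const_mul (C * Real.log 2)⁻¹
    rw [mul_zero] at this
    exact this
  refine squeeze_zero' ?_ ?_ h2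
  · filter_upwards [logbN_tendsto.eventually_gt_atTop 0, (cN_tendsto h).eventually_gt_atTop 0] with N h3 h4
    positivity
  · filter_upwards [logbN_tendsto.eventually_gt_atTop 0, hc, eventually_gt_atTop 0] with N h3 h4 h5
    have hN : (0:ℝ) < N := by exact_mod_cast h5
    have e : Real.exp (A * ε * Real.logb 2 N) = (N:ℝ) ^ (γ/2) := by
      rw [Real.rpow_def_of_pos hN, Real.logb, hε, hγ]
      congr 1
      field_simp
    rw [e]
    have e2 : (N:ℝ) ^ γ = (N:ℝ) ^ (γ/2) * (N:ℝ) ^ (γ/2) := by rw [← Real.rpow_add hN]; ring_nf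
    have hp : 0 < (N:ℝ) ^ (γ/2) := by positivity
    calc (N:ℝ) ^ (γ/2) * Real.logb 2 N / cN P X N ≤ (N:ℝ) ^ (γ/2) * Real.logb 2 N / (C * (N:ℝ) ^ γ) := by gcongr
      _ = _ := by
        rw [e2, Real.logb]; field_simp

lemma third_lim (h : RV P X α) (ε : ℝ) (hε : 0 < ε) (m : ℕ) :
    Tendsto (fun N : ℕ => 4 * N * tail P X (ε * cN P X N) * 2 ^ ((m+3) * lN (m+4) N) *
      (∫ ω, (if ε * cN P X N < X ω then X ω else 0) ∂P) * (Real.logb 2 N / cN P X N)) atTop (nhds 0) := by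
  obtain ⟨B, x0, hB, hx0, hb⟩ := h.big_bound
  have hz := (h.z_lim ε hε).comp y_tendsto
  have h2 : Tendsto (fun N : ℕ => B * ε * ((2 * (N:ℝ) * Real.logb 2 N) * tail P X (ε * cN P X N)) ^ 2 * (Real.logb 2 N)⁻¹)
      atTop (nhds 0) := by
    have := ((hz.pow 2).const_mul (B * ε)).mul logbN_tendsto.inv_tendsto_atTop
    rw [mul_zero] at this
    exact this
  refine squeeze_zero' ?_ ?_ h2
  · filter_upwards [logbN_tendsto.eventually_gt_atTop 0, (cN_tendsto h).eventually_gt_atTop 0] with N h3 h4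
    have h5 := tail_nonneg P X (ε * cN P X N)
    have h6 : 0 ≤ ∫ ω, (if ε * cN P X N < X ω then X ω else 0) ∂P := by
      refine integral_nonneg fun ω => ?_
      simp only [Pi.zero_apply]
      split_ifs
      · exact h.hX0 ω
      · exact le_rfl
    positivity
  · filter_upwards [logbN_tendsto.eventually_gt_atTop 0, (cN_tendsto h).eventually_gt_atTop 0, eventually_gt_atTop 0,
      (cN_tendsto h).eventually_ge_atTop (x0 / ε)] with N h3 h4 h5 h6
    have hN : (0:ℝ) < N := by exact_mod_cast h5
    have h7 := hb (ε * cN P X N) (by rw [div_le_iff₀ hε] at h6; linarith)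
    have h8 := tail_nonneg P X (ε * cN P X N)
    have h9 : (2:ℝ) ^ ((m+3) * lN (m+4) N) ≤ N := by
      rw [← two_rpow_L N h5, ← Real.rpow_natCast]
      apply Real.rpow_le_rpow_of_exponent_le (by norm_num)
      have := lN_le (m+4) N
      push_cast at this ⊢
      rw [le_div_iff₀ (by positivity)] at this
      have h10 : (0:ℝ) ≤ lN (m+4) N := by positivity
      nlinarith
    calc _ ≤ 4 * N * tail P X (ε * cN P X N) * N * (B * (ε * cN P X N * tail P X (ε * cN P X N))) * (Real.logb 2 N / cN P X N) := by
          have h11 : 0 ≤ ∫ ω, (if ε * cN P X N < X ω then X ω else 0) ∂P := by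
            refine integral_nonneg fun ω => ?_
            simp only [Pi.zero_apply]
            split_ifs
            · exact h.hX0 ω
            · exact le_rfl
          gcongr
      _ = _ := by field_simp; ring

lemma upper_ev (h : RV P X α) (ξ : (N : ℕ) → ℕ → Fin N → Fin 2 → Ω → ℝ) (hξ : ∀ N, Setup P X N (ξ N))
    (v : ℕ → ℝ) (hv : ∀ N : ℕ, 1 ≤ N → ∀ᵐ ω ∂P, Tendsto (fun n : ℕ => brwMax N (jmp (ξ N) ω) n / n) atTop (nhds (v N)))
    (m k : ℕ) (r : ℝ) (hr : ((m:ℝ) + 4) ^ (1 - 1/α) * PhiF α (m+2) (k+1) / ((k:ℝ) + 1) < r) :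
    ∀ᶠ N : ℕ in atTop, v N * Real.logb 2 N / cN P X N < r := by
  have hα := h.hα
  set T := ((m:ℝ) + 4) ^ (1 - 1/α) * PhiF α (m+2) (k+1) / ((k:ℝ) + 1) with hT
  have hlog2 : 0 < Real.log 2 := Real.log_pos (by norm_num)
  set A := 2 * Real.log 2 / (r - T) with hA
  have hrT : 0 < r - T := by linarith
  have hA0 : 0 < A := by positivity
  set ε := Real.log 2 / (2 * A * (α+1)) with hε
  have hε0 : 0 < ε := by positivity
  have h1 := (first_lim h ξ hξ (m+4) (by omega) (m+2) (k+1)).div_const ((k:ℝ) + 1)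
  have e : ((m+4:ℕ):ℝ) ^ (1 - 1/α) * PhiF α (m+2) (k+1) / ((k:ℝ) + 1) = T := by
    rw [hT]; push_cast; rfl
  rw [e] at h1
  have h2 := ((h1.add_const (Real.log 2 / A)).add ((second_lim h A ε hA0 hε).mul_const (∫ ω, X ω ∂P))).add
    (third_lim h ε hε0 m)
  have hlt : T + Real.log 2 / A + 0 * (∫ ω, X ω ∂P) + 0 < r := by
    have : Real.log 2 / A = (r - T) / 2 := by rw [hA]; field_simp
    rw [this]; linarith
  filter_upwards [h2.eventually_lt_const hlt, lN_pos (m+4) (by omega), eventually_gt_atTop 0,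
    logbN_tendsto.eventually_gt_atTop 0, (cN_tendsto h).eventually_gt_atTop 0] with N h3 h4 h5 h6 h7
  refine lt_of_le_of_lt ?_ h3
  have hl : (0:ℝ) < lN (m+4) N := by exact_mod_cast h4
  have h8 := (hξ N).upper h.hi h5 (lN (m+4) N) h4 (m+3) (k+1) (by omega) (by omega) (ε * cN P X N)
    (A * Real.logb 2 N / cN P X N) (by positivity) (by positivity) (v N) (hv N h5)
  rw [show m + 3 - 1 = m + 2 by omega] at h8
  have e1 : A * Real.logb 2 N / cN P X N * (ε * cN P X N) = A * ε * Real.logb 2 N := by field_simp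
  rw [e1] at h8
  have hf : 0 ≤ Real.logb 2 N / cN P X N := by positivity
  rw [mul_div_assoc]
  refine (mul_le_mul_of_nonneg_right h8 hf).trans (le_of_eq ?_)
  rw [add_mul, add_mul, add_mul]
  push_cast
  have e3 : Phi (m+2) (k+1) (blaw P (ξ N) (lN (m+4) N)) / ((k + 1) * lN (m+4) N) * (Real.logb 2 N / cN P X N)
     = Phi (m+2) (k+1) (blaw P (ξ N) (lN (m+4) N)) / cN P X N * (Real.logb 2 N / lN (m+4) N) / ((k:ℝ) + 1) := by
    field_simp
  have e4 : Real.log 2 / (A * Real.logb 2 N / cN P X N) * (Real.logb 2 N / cN P X N) = Real.log 2 / A := by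
    field_simp
  rw [e3, e4]
  ring

lemma exists_mk (α : ℝ) (hα : 1 < α) (r : ℝ) (hr : rho α < r) :
    ∃ m k : ℕ, ((m:ℝ) + 4) ^ (1 - 1/α) * PhiF α (m+2) (k+1) / ((k:ℝ) + 1) < r := by
  have ht := tendsto_one_div_add_atTop_nhds_zero_nat (𝕜 := ℝ)
  have h1 : Tendsto (fun m : ℕ => (1 + 3 * (1 / ((m:ℝ) + 1))) * (1 + 2 * (1 / ((m:ℝ) + 1))) * rho α) atTop
      (nhds ((1 + 3 * 0) * (1 + 2 * 0) * rho α)) :=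
    (((ht.const_mul 3).const_add 1).mul ((ht.const_mul 2).const_add 1)).mul_const _
  obtain ⟨m, hm⟩ := (h1.eventually_lt_const (show (1 + 3 * 0) * (1 + 2 * 0) * rho α < r by linarith)).exists
  have ha1 : 0 < 1 / α := by positivity
  have ha2 : 1 / α < 1 := by rw [div_lt_one (by linarith)]; exact hα
  refine ⟨m, (m+1)^2, lt_of_le_of_lt ?_ hm⟩
  set k : ℕ := (m+1)^2 with hk
  have hle := le_rho α hα m k
  have hpos : 0 ≤ PhiF α (m+2) (k+1) := integral_nonneg fun u => RR_nonneg _ _ _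
  have hm1 : (0:ℝ) < m + 1 := by positivity
  have hb : ((m:ℝ) + 4) ^ (1 - 1/α) ≤ (1 + 3 * (1 / ((m:ℝ) + 1))) * ((m:ℝ) + 1) ^ (1 - 1/α) := by
    have e : (m:ℝ) + 4 = (1 + 3 * (1 / ((m:ℝ) + 1))) * ((m:ℝ) + 1) := by field_simp; ring
    rw [e, Real.mul_rpow (by positivity) hm1.le]
    have : (1 + 3 * (1 / ((m:ℝ) + 1))) ^ (1 - 1/α) ≤ (1 + 3 * (1 / ((m:ℝ) + 1))) ^ (1:ℝ) := by
      apply Real.rpow_le_rpow_of_exponent_le _ (by linarith)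
      have : 0 < 1 / ((m:ℝ) + 1) := by positivity
      linarith
    rw [Real.rpow_one] at this
    gcongr
  have hc : ((k:ℝ) + m + 3) / ((k:ℝ) + 1) ≤ 1 + 2 * (1 / ((m:ℝ) + 1)) := by
    rw [div_le_iff₀ (by positivity), hk]
    push_cast
    have : (1 + 2 * (1 / ((m:ℝ) + 1))) * (((m:ℝ) + 1) ^ 2 + 1) =
      ((m:ℝ) + 1) ^ 2 + 1 + 2 * (m + 1) + 2 / ((m:ℝ) + 1) := by field_simp; ring
    rw [this]
    have h3 : 0 < 2 / ((m:ℝ) + 1) := by positivity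
    nlinarith
  have hel : 0 ≤ elt α m k := by unfold elt; positivity
  calc ((m:ℝ) + 4) ^ (1 - 1/α) * PhiF α (m+2) (k+1) / ((k:ℝ) + 1)
      ≤ (1 + 3 * (1 / ((m:ℝ) + 1))) * ((m:ℝ) + 1) ^ (1 - 1/α) * PhiF α (m+2) (k+1) / ((k:ℝ) + 1) := by gcongr
    _ = (1 + 3 * (1 / ((m:ℝ) + 1))) * (((k:ℝ) + m + 3) / ((k:ℝ) + 1)) * elt α m k := by
        unfold elt; field_simp
    _ ≤ (1 + 3 * (1 / ((m:ℝ) + 1))) * (1 + 2 * (1 / ((m:ℝ) + 1))) * elt α m k := by gcongr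
    _ ≤ _ := by gcongr

end

/-- for `α > 1` there is a constant `ρ_α ∈ (0,∞)`, depending only on `α`,
such that for every `N`-BRW with displacement tail regularly varying with index `α`
(so that `E[X] < ∞` and the speed `v_N` exists), `v_N log₂ N / c_N → ρ_α` as `N → ∞`,
i.e. `v_N ~ ρ_α c_N / log₂ N`. -/
theorem stmt_18 (α : ℝ) (hα : 1 < α) :
    ∃ ρ : ℝ, 0 < ρ ∧
      ∀ (Ω : Type) [MeasurableSpace Ω] (P : Measure Ω) [IsProbabilityMeasure P]
        (X : Ω → ℝ), Measurable X → (∀ ω, 0 ≤ X ω) → Integrable X P →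
        (∀ l : ℝ, 0 < l →
          Tendsto (fun x => tail P X x / tail P X (l * x)) atTop (nhds (l ^ α))) →
        ∀ ξ : (N : ℕ) → ℕ → Fin N → Fin 2 → Ω → ℝ,
        (∀ N n i j, Measurable (ξ N n i j)) →
        (∀ N n i j ω, 0 ≤ ξ N n i j ω) →
        (∀ N n i j, Measure.map (ξ N n i j) P = Measure.map X P) →
        (∀ N, iIndepFun
          (fun p : ℕ × Fin N × Fin 2 => ξ N p.1 p.2.1 p.2.2) P) →
        ∀ v : ℕ → ℝ,
        (∀ N : ℕ, 1 ≤ N →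
          (∀ᵐ ω ∂P, Tendsto
            (fun n : ℕ => brwMax N (fun k i j => ξ N k i j ω) n / n) atTop (nhds (v N))) ∧
          (∀ᵐ ω ∂P, Tendsto
            (fun n : ℕ => brwMin N (fun k i j => ξ N k i j ω) n / n) atTop (nhds (v N)))) →
        Tendsto (fun N : ℕ => v N * Real.logb 2 N / cN P X N) atTop (nhds ρ) := by
  refine ⟨rho α, rho_pos α hα, ?_⟩
  intro Ω _ P _ X hX hX0 hi hrv ξ hm h0 hlaw hind v hv
  have h : RV P X α := ⟨hα, hX, hX0, hi, hrv⟩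
  have hξ : ∀ N, Setup P X N (ξ N) := fun N => ⟨hX, hX0, hm N, h0 N, hlaw N, hind N⟩
  have hv' : ∀ N : ℕ, 1 ≤ N → ∀ᵐ ω ∂P, Tendsto (fun n : ℕ => brwMax N (jmp (ξ N) ω) n / n) atTop (nhds (v N)) :=
    fun N hN => (hv N hN).1
  rw [tendsto_order]
  constructor
  · intro r hr
    obtain ⟨p, hp⟩ := exists_lt_of_lt_ciSup (f := fun p : ℕ × ℕ => elt α p.1 p.2) hr
    exact lower_ev h ξ hξ v hv' _ _ r hp
  · intro r hr
    obtain ⟨m, k, hmk⟩ := exists_mk α hα r hr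
    exact upper_ev h ξ hξ v hv' m k r hmk

end
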